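/- Assume the random transfer-matrix setup below, with φ ∈ (0, π), φ ∉ {π/4, π/2, 3π/4}. Then for ν-almost every ω there exists an initial vector v₀(ω) ∈ ℝ² \ {0} such that the associated Prüfer radii R_n(ω) satisfy lim_{n→∞} ln R_n(ω) / ln n = −λ² / (8 sin²φ). -/

import Mathlib

open MeasureTheory ProbabilityTheory Filter Matrix

/-! In the coordinate `p` the step is a rotation by `φ`, up to a summable error, followed by a
shear of random size `γ = g / sin φ`. Expanding `log ‖p‖` to second order in `γ`, the linear terms
form a martingale, and the quadratic ones have mean `σ / (8 n)` up to phases `e^{-2iθ}`, `e^{-4iθ}`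
that rotate almost rigidly and cancel; so a fixed initial vector gives an orbit growing like
`n ^ (σ / 8)`, with `σ = λ² / sin² φ`. The Wronskian of two orbits converges to a nonzero limit, so
the imaginary part of their ratio is of order `n ^ (-σ / 4)`; its real part has martingale
increments of the same size, and the ratio converges to a real number `l` at that rate. The
difference of the second orbit and `l` times the first is therefore `O(n ^ (-σ / 8 + o(1)))`, and
the Wronskian forbids faster decay. -/

open SummationFilter Asymptotics ComplexConjugate Topology

section ConditionalSummability

lemma hasSum_conditional_nat_iff {E : Type*} [AddCommMonoid E] [TopologicalSpace E]
    {x : ℕ → E} {l : E} :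
    HasSum x l (conditional ℕ) ↔ Tendsto (fun n ↦ ∑ k ∈ Finset.range n, x k) atTop (𝓝 l) := by
  rw [HasSum, conditional_filter_eq_map_range, tendsto_map'_iff]
  rfl

variable {E : Type*} [NormedAddCommGroup E]

lemma summable_conditional_of_summable {x : ℕ → E} (h : Summable x) : Summable x (conditional ℕ) :=
  h.mono_filter (conditional ℕ).le_atTop

lemma summable_conditional_nat_iff_cauchySeq [CompleteSpace E] {x : ℕ → E} :
    Summable x (conditional ℕ) ↔ CauchySeq fun n ↦ ∑ k ∈ Finset.range n, x k := by
  refine ⟨fun ⟨_, hl⟩ ↦ (hasSum_conditional_nat_iff.1 hl).cauchySeq, fun h ↦ ?_⟩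
  exact (cauchySeq_tendsto_of_complete h).imp fun _ ↦ hasSum_conditional_nat_iff.2

lemma exists_norm_sum_range_le {x : ℕ → E} (h : Summable x (conditional ℕ)) :
    ∃ K, 0 ≤ K ∧ ∀ n, ‖∑ k ∈ Finset.range n, x k‖ ≤ K := by
  obtain ⟨l, hl⟩ := h
  obtain ⟨K, hK⟩ := (hasSum_conditional_nat_iff.1 hl).norm.bddAbove_range
  exact ⟨K, (norm_nonneg _).trans (hK ⟨0, rfl⟩), fun n ↦ hK ⟨n, rfl⟩⟩

lemma summable_conditional_congr_atTop {x y : ℕ → E} (hx : Summable x (conditional ℕ))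
    (hxy : x =ᶠ[atTop] y) : Summable y (conditional ℕ) := by
  have hdiff : Summable fun n ↦ y n - x n := by
    refine summable_zero.congr_cofinite ?_
    rw [Nat.cofinite_eq_atTop]
    filter_upwards [hxy] with n hn
    rw [hn, sub_self]
  simpa using hx.add (summable_conditional_of_summable hdiff)

variable [NormedSpace ℝ E]

/- Kronecker's lemma. Summation by parts turns the partial sums into `b n • W n` minus an average
of `W` weighted by the increments of `b`, where `W` is the null sequence of remainders. -/
theorem isLittleO_sum_range_of_summable_inv_smul {x : ℕ → E} {b : ℕ → ℝ} (hpos : ∀ n, 0 < b n)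
    (hmono : Monotone b) (htop : Tendsto b atTop atTop)
    (h : Summable (fun n ↦ (b n)⁻¹ • x n) (conditional ℕ)) :
    (fun n ↦ ∑ k ∈ Finset.range n, x k) =o[atTop] b := by
  obtain ⟨l, hl⟩ := h
  set W : ℕ → E := fun n ↦ ∑ k ∈ Finset.range n, (b k)⁻¹ • x k - l with hW
  have hW0 : W =o[atTop] fun _ ↦ (1 : ℝ) :=
    (isLittleO_one_iff ℝ).2 (by simpa [hW] using (hasSum_conditional_nat_iff.1 hl).sub_const l)
  have by_parts (n : ℕ) : ∑ k ∈ Finset.range n, x k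
      = b n • W n - b 0 • W 0 - ∑ k ∈ Finset.range n, (b (k + 1) - b k) • W (k + 1) := by
    induction n with
    | zero => simp
    | succ n ih =>
      have hx : x n = b n • (W (n + 1) - W n) := by
        simp [hW, Finset.sum_range_succ, smul_smul, (hpos n).ne']
      rw [Finset.sum_range_succ, ih, Finset.sum_range_succ, hx]
      module
  have hconst (c : E) : (fun _ : ℕ ↦ c) =o[atTop] b :=
    isLittleO_const_left.2 (Or.inr (tendsto_norm_atTop_atTop.comp htop))
  have hboundary : (fun n ↦ b n • W n) =o[atTop] b := by
    simpa using (isBigO_refl b atTop).smul_isLittleO hW0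
  have haverage : (fun n ↦ ∑ k ∈ Finset.range n, (b (k + 1) - b k) • W (k + 1))
      =o[atTop] fun n ↦ ∑ k ∈ Finset.range n, (b (k + 1) - b k) := by
    refine IsLittleO.sum_range ?_ (fun n ↦ sub_nonneg.2 (hmono n.le_succ)) ?_
    · simpa using (isBigO_refl (fun n ↦ b (n + 1) - b n) atTop).smul_isLittleO
        (hW0.comp_tendsto (tendsto_add_atTop_nat 1))
    · simp only [Finset.sum_range_sub]
      exact tendsto_atTop_add_const_right _ _ htop
  have hincr : (fun n ↦ ∑ k ∈ Finset.range n, (b (k + 1) - b k)) =O[atTop] b := by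
    simp only [Finset.sum_range_sub]
    exact (isBigO_refl b atTop).sub
      (isLittleO_const_left.2 (Or.inr (tendsto_norm_atTop_atTop.comp htop))).isBigO
  exact ((hboundary.sub (hconst _)).sub (haverage.trans_isBigO hincr)).congr_left
    fun n ↦ (by_parts n).symm

lemma norm_sub_le_div_of_weighted_increments_bounded {T : ℕ → E} {b : ℕ → ℝ} {K : ℝ} {m : ℕ}
    (hpos : ∀ n, 0 < b n) (hmono : Monotone b)
    (hK : ∀ n, ‖∑ k ∈ Finset.Ico m n, b k • (T (k + 1) - T k)‖ ≤ K) {n : ℕ} (hmn : m ≤ n) :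
    ‖T n - T m‖ ≤ K / b m := by
  set V : ℕ → E := fun n ↦ ∑ k ∈ Finset.Ico m n, b k • (T (k + 1) - T k) with hV
  have abel : ‖T n - T m - (b n)⁻¹ • V n‖ ≤ K * ((b m)⁻¹ - (b n)⁻¹) := by
    induction n, hmn using Nat.le_induction with
    | base => simp [hV]
    | succ n hmn ih =>
      have hdec : 0 ≤ (b n)⁻¹ - (b (n + 1))⁻¹ :=
        sub_nonneg.2 (inv_anti₀ (hpos n) (hmono n.le_succ))
      have hstep : T (n + 1) - T n = (b n)⁻¹ • (V (n + 1) - V n) := by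
        simp [hV, Finset.sum_Ico_succ_top hmn, smul_smul, (hpos n).ne']
      calc ‖T (n + 1) - T m - (b (n + 1))⁻¹ • V (n + 1)‖
          = ‖(T n - T m - (b n)⁻¹ • V n) + ((b n)⁻¹ - (b (n + 1))⁻¹) • V (n + 1)‖ := by
            rw [← sub_add_sub_cancel (T (n + 1)) (T n), hstep]
            congr 1
            module
        _ ≤ K * ((b m)⁻¹ - (b n)⁻¹) + ((b n)⁻¹ - (b (n + 1))⁻¹) * K := by
            refine norm_add_le_of_le ih ?_
            rw [norm_smul, Real.norm_of_nonneg hdec]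
            exact mul_le_mul_of_nonneg_left (hK _) hdec
        _ = K * ((b m)⁻¹ - (b (n + 1))⁻¹) := by ring
  calc ‖T n - T m‖ ≤ K * ((b m)⁻¹ - (b n)⁻¹) + (b n)⁻¹ * K := by
        rw [← sub_add_cancel (T n - T m) ((b n)⁻¹ • V n)]
        refine norm_add_le_of_le abel ?_
        rw [norm_smul, Real.norm_of_nonneg (inv_pos.2 (hpos n)).le]
        exact mul_le_mul_of_nonneg_left (hK n) (inv_pos.2 (hpos n)).le
    _ = K / b m := by ring

theorem exists_norm_sub_le_div_of_summable_smul_increments [CompleteSpace E] {T : ℕ → E}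
    {b : ℕ → ℝ} (hpos : ∀ n, 0 < b n) (hmono : Monotone b) (htop : Tendsto b atTop atTop)
    (h : Summable (fun n ↦ b n • (T (n + 1) - T n)) (conditional ℕ)) :
    ∃ l K, ∀ n, ‖T n - l‖ ≤ K / b n := by
  obtain ⟨K, -, hK⟩ := exists_norm_sum_range_le h
  have hT {m n : ℕ} (hmn : m ≤ n) : ‖T n - T m‖ ≤ (K + K) / b m := by
    refine norm_sub_le_div_of_weighted_increments_bounded hpos hmono (fun n ↦ ?_) hmn
    rcases le_total m n with hmn | hnm
    · rw [Finset.sum_Ico_eq_sub _ hmn]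
      exact norm_sub_le_of_le (hK n) (hK m)
    · simpa [hnm] using (norm_nonneg _).trans (hK 0)
  have hcauchy : CauchySeq T := by
    refine cauchySeq_of_le_tendsto_0' (fun n ↦ (K + K) / b n) (fun m n hmn ↦ ?_)
      (htop.const_div_atTop _)
    rw [dist_comm, dist_eq_norm]
    exact hT hmn
  obtain ⟨l, hl⟩ := cauchySeq_tendsto_of_complete hcauchy
  refine ⟨l, K + K, fun m ↦ ?_⟩
  rw [norm_sub_rev]
  exact le_of_tendsto (hl.sub_const _).norm (eventually_atTop.2 ⟨m, fun n ↦ hT⟩)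

/- `(1 - ρ) ζ k` is `ζ k - ζ (k + 1)`, which sums by Dirichlet's test, up to an error dominated
by `η`. -/
theorem summable_conditional_inv_smul_of_almost_rotating {ζ : ℕ → ℂ} {η : ℕ → ℝ} {ρ : ℂ}
    (hρ : ρ ≠ 1) (hζ : ∀ n, ‖ζ n‖ ≤ 1) (hrot : ∀ n, ‖ζ (n + 1) - ρ * ζ n‖ ≤ η n)
    (hη : Summable fun n : ℕ ↦ η n / (n + 1)) :
    Summable (fun n : ℕ ↦ ((n : ℝ) + 1)⁻¹ • ζ n) (conditional ℕ) := by
  have hdirichlet : Summable (fun n : ℕ ↦ ((n : ℝ) + 1)⁻¹ • (ζ n - ζ (n + 1))) (conditional ℕ) := by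
    rw [summable_conditional_nat_iff_cauchySeq]
    refine Antitone.cauchySeq_series_mul_of_tendsto_zero_of_bounded (b := 1 + 1)
      (fun m n hmn ↦ by gcongr) ?_ fun n ↦ ?_
    · simpa using tendsto_one_div_add_atTop_nhds_zero_nat (𝕜 := ℝ)
    · rw [Finset.sum_range_sub']
      exact norm_sub_le_of_le (hζ 0) (hζ n)
  have herror : Summable fun n : ℕ ↦ ((n : ℝ) + 1)⁻¹ • (ζ (n + 1) - ρ * ζ n) := by
    refine .of_norm_bounded hη fun n ↦ ?_
    rw [norm_smul, Real.norm_of_nonneg (by positivity), inv_mul_eq_div]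
    gcongr
    exact hrot n
  have hsum := hdirichlet.add (summable_conditional_of_summable herror)
  refine (hsum.mul_left (1 - ρ)⁻¹).congr fun n ↦ ?_
  have : 1 - ρ ≠ 0 := sub_ne_zero.2 hρ.symm
  simp only [Complex.real_smul]
  push_cast
  field_simp
  ring

end ConditionalSummability

section LogarithmicGrowth

lemma summable_increment_div_sq {b : ℕ → ℝ} (hpos : ∀ n, 0 < b n) (hmono : Monotone b) :
    Summable fun n ↦ (b (n + 1) - b n) / b (n + 1) ^ 2 := by
  have hle (n : ℕ) : (b (n + 1) - b n) / b (n + 1) ^ 2 ≤ (b n)⁻¹ - (b (n + 1))⁻¹ := by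
    have h₀ := hpos n
    have h₁ := hpos (n + 1)
    rw [inv_sub_inv h₀.ne' h₁.ne', sq]
    gcongr
    · exact sub_nonneg.2 (hmono n.le_succ)
    · exact hmono n.le_succ
  refine summable_of_sum_range_le (c := (b 0)⁻¹)
    (fun n ↦ div_nonneg (sub_nonneg.2 (hmono n.le_succ)) (sq_nonneg _)) fun n ↦ ?_
  refine (Finset.sum_le_sum fun k _ ↦ hle k).trans ?_
  rw [Finset.sum_range_sub']
  linarith [inv_pos.2 (hpos n)]

lemma harmonic_succ_pos (n : ℕ) : 0 < (harmonic (n + 1) : ℝ) :=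
  mod_cast harmonic_pos n.succ_ne_zero

lemma cast_harmonic_succ (n : ℕ) : (harmonic (n + 1) : ℝ) = harmonic n + ((n : ℝ) + 1)⁻¹ := by
  simp [harmonic_succ]

lemma monotone_harmonic_succ : Monotone fun n : ℕ ↦ (harmonic (n + 1) : ℝ) :=
  monotone_nat_of_le_succ fun n ↦ by
    rw [cast_harmonic_succ (n + 1)]
    exact le_add_of_nonneg_right (by positivity)

lemma summable_inv_mul_inv_harmonic_sq :
    Summable fun n : ℕ ↦ ((n : ℝ) + 1)⁻¹ * ((harmonic (n + 1) : ℝ)⁻¹) ^ 2 := by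
  rw [← summable_nat_add_iff 1]
  refine (summable_increment_div_sq harmonic_succ_pos monotone_harmonic_succ).congr fun n ↦ ?_
  rw [cast_harmonic_succ (n + 1), add_sub_cancel_left, inv_pow, div_eq_mul_inv]

lemma tendsto_log_natCast_atTop : Tendsto (fun n : ℕ ↦ Real.log n) atTop atTop :=
  Real.tendsto_log_atTop.comp tendsto_natCast_atTop_atTop

lemma isLittleO_log_natCast_of_isBigO_one {E : Type*} [NormedAddCommGroup E] {f : ℕ → E}
    (h : f =O[atTop] fun _ ↦ (1 : ℝ)) : f =o[atTop] fun n : ℕ ↦ Real.log n :=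
  h.trans_isLittleO (isLittleO_const_left.2 (Or.inr
    (tendsto_norm_atTop_atTop.comp tendsto_log_natCast_atTop)))

lemma tendsto_harmonic_succ_sub_log :
    Tendsto (fun n : ℕ ↦ (harmonic (n + 1) : ℝ) - Real.log n) atTop
      (𝓝 Real.eulerMascheroniConstant) := by
  have hinv : Tendsto (fun n : ℕ ↦ ((n : ℝ) + 1)⁻¹) atTop (𝓝 0) := by
    simpa using tendsto_one_div_add_atTop_nhds_zero_nat (𝕜 := ℝ)
  simpa only [cast_harmonic_succ, add_sub_right_comm, add_zero] using
    Real.tendsto_harmonic_sub_log.add hinv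

lemma tendsto_harmonic_succ_atTop : Tendsto (fun n : ℕ ↦ (harmonic (n + 1) : ℝ)) atTop atTop := by
  simpa only [sub_add_cancel] using
    tendsto_harmonic_succ_sub_log.add_atTop tendsto_log_natCast_atTop

lemma harmonic_succ_isBigO_log :
    (fun n : ℕ ↦ (harmonic (n + 1) : ℝ)) =O[atTop] fun n : ℕ ↦ Real.log n := by
  simpa only [sub_add_cancel] using (isLittleO_log_natCast_of_isBigO_one
    (tendsto_harmonic_succ_sub_log.isBigO_one ℝ)).isBigO.add
    (isBigO_refl (fun n : ℕ ↦ Real.log n) atTop)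

theorem tendsto_div_log_of_increments {f e m : ℕ → ℝ} {c : ℝ}
    (hf : ∀ n : ℕ, f (n + 1) - f n = c * ((n : ℝ) + 1)⁻¹ + e n + m n)
    (he : Summable e (conditional ℕ))
    (hm : Summable (fun n ↦ (harmonic (n + 1) : ℝ)⁻¹ * m n) (conditional ℕ)) :
    Tendsto (fun n ↦ f n / Real.log n) atTop (𝓝 c) := by
  have hsum (n : ℕ) : f n - c * Real.log n = f 0 + c * ((harmonic n : ℝ) - Real.log n)
      + ∑ k ∈ Finset.range n, e k + ∑ k ∈ Finset.range n, m k := by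
    induction n with
    | zero => simp
    | succ n ih =>
      rw [Finset.sum_range_succ, Finset.sum_range_succ, cast_harmonic_succ]
      linear_combination ih + hf n
  have hbounded : (fun n ↦ f 0 + c * ((harmonic n : ℝ) - Real.log n)
      + ∑ k ∈ Finset.range n, e k) =O[atTop] fun _ ↦ (1 : ℝ) := by
    obtain ⟨l, hl⟩ := he
    exact (((Real.tendsto_harmonic_sub_log.const_mul c).const_add (f 0)).add
      (hasSum_conditional_nat_iff.1 hl)).isBigO_one ℝ
  have hm' : (fun n ↦ ∑ k ∈ Finset.range n, m k) =o[atTop] fun n : ℕ ↦ Real.log n :=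
    (isLittleO_sum_range_of_summable_inv_smul harmonic_succ_pos monotone_harmonic_succ
      tendsto_harmonic_succ_atTop hm).trans_isBigO harmonic_succ_isBigO_log
  have hlim : Tendsto (fun n : ℕ ↦ (f n - c * Real.log n) / Real.log n + c) atTop (𝓝 (0 + c)) :=
    (((isLittleO_log_natCast_of_isBigO_one hbounded).add hm').congr_left
      fun n ↦ (hsum n).symm).tendsto_div_nhds_zero.add_const c
  rw [zero_add] at hlim
  refine hlim.congr' ?_
  filter_upwards [tendsto_log_natCast_atTop.eventually_gt_atTop 0] with n hn
  field_simp
  ring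

end LogarithmicGrowth

section DoublePhase

/-- For `z = ‖z‖ e^{iθ}` this is `e^{-2iθ}`, the phase entering the Prüfer equations; it is `0` at
`z = 0`. -/
noncomputable def doublePhase (z : ℂ) : ℂ := conj z / z

lemma norm_doublePhase_le_one (z : ℂ) : ‖doublePhase z‖ ≤ 1 := by
  rw [doublePhase, norm_div, Complex.norm_conj]
  exact div_self_le_one _

lemma doublePhase_mul (w z : ℂ) : doublePhase (w * z) = doublePhase w * doublePhase z := by
  rw [doublePhase, map_mul, mul_div_mul_comm]
  rfl

lemma norm_doublePhase_sub_le (w : ℂ) {z : ℂ} (hz : z ≠ 0) :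
    ‖doublePhase w - doublePhase z‖ ≤ 2 * (‖w - z‖ / ‖z‖) := by
  have hz' : 0 < ‖z‖ := norm_pos_iff.2 hz
  rcases eq_or_ne w 0 with rfl | hw
  · calc ‖doublePhase 0 - doublePhase z‖ = ‖doublePhase z‖ := by simp [doublePhase]
      _ ≤ 2 * (‖0 - z‖ / ‖z‖) := by
        rw [zero_sub, norm_neg, div_self hz'.ne']
        linarith [norm_doublePhase_le_one z]
  calc ‖doublePhase w - doublePhase z‖
      = ‖conj w * (z - w) + w * conj (w - z)‖ / (‖w‖ * ‖z‖) := by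
        rw [doublePhase, doublePhase, div_sub_div _ _ hw hz, norm_div, norm_mul, map_sub]
        congr 2
        ring
    _ ≤ (‖w‖ * ‖w - z‖ + ‖w‖ * ‖w - z‖) / (‖w‖ * ‖z‖) := by
        gcongr
        refine norm_add_le_of_le ?_ ?_
        · rw [norm_mul, Complex.norm_conj, norm_sub_rev]
        · rw [norm_mul, Complex.norm_conj]
    _ = 2 * (‖w - z‖ / ‖z‖) := by
        field_simp
        ring

lemma one_add_sq_re (ζ : ℂ) :
    ((1 + ζ) ^ 2).re = 1 + 2 * ζ.re + (ζ ^ 2).re := by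
  simp [sq]
  ring

end DoublePhase

section Shear

/-- The matrix `[[1, 0], [g, 1]]` in the complex Prüfer coordinate, with `γ = g / sin φ`. -/
noncomputable def shear (γ : ℝ) : ℂ →ₗ[ℝ] ℂ where
  toFun z := z - Complex.I * (γ * z.re : ℝ)
  map_add' z w := by
    rw [Complex.add_re]
    push_cast
    ring
  map_smul' c z := by
    rw [Complex.smul_re]
    simp only [Complex.real_smul, smul_eq_mul, RingHom.id_apply]
    push_cast
    ring

lemma shear_apply (γ : ℝ) (z : ℂ) : shear γ z = z - Complex.I * (γ * z.re : ℝ) := rfl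

lemma re_shear (γ : ℝ) (z : ℂ) : (shear γ z).re = z.re := by simp [shear_apply]

lemma im_shear (γ : ℝ) (z : ℂ) : (shear γ z).im = z.im - γ * z.re := by simp [shear_apply]

lemma shear_eq_mul (γ : ℝ) (z : ℂ) :
    shear γ z = z * (1 + -(Complex.I * (γ / 2) * (1 + doublePhase z))) := by
  rcases eq_or_ne z 0 with rfl | hz
  · simp [shear_apply]
  · rw [shear_apply, doublePhase]
    push_cast
    rw [Complex.re_eq_add_conj]
    field_simp
    ring

lemma norm_shear_factor_le (γ : ℝ) (z : ℂ) :
    ‖-(Complex.I * (γ / 2) * (1 + doublePhase z))‖ ≤ |γ| := by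
  have h : ‖1 + doublePhase z‖ ≤ 1 + 1 := norm_add_le_of_le norm_one.le (norm_doublePhase_le_one z)
  calc ‖-(Complex.I * (γ / 2) * (1 + doublePhase z))‖
      = |γ| / 2 * ‖1 + doublePhase z‖ := by simp
    _ ≤ |γ| / 2 * (1 + 1) := by gcongr
    _ = |γ| := by ring

lemma norm_shear_sub_le (γ : ℝ) (z : ℂ) : ‖shear γ z - z‖ ≤ |γ| * ‖z‖ := by
  rw [shear_eq_mul, mul_add, mul_one, add_sub_cancel_left, norm_mul, mul_comm]
  exact mul_le_mul_of_nonneg_right (norm_shear_factor_le γ z) (norm_nonneg z)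

/- The second order Taylor polynomial of `log (1 + w)` at the shear factor `w`. -/
lemma abs_log_norm_shear_sub_le {γ : ℝ} (hγ : |γ| ≤ 1 / 2) {z : ℂ} (hz : z ≠ 0) :
    |Real.log ‖shear γ z‖ - Real.log ‖z‖
      - (γ / 2 * (doublePhase z).im + γ ^ 2 / 8 * ((1 + doublePhase z) ^ 2).re)| ≤ |γ| ^ 3 := by
  set w : ℂ := -(Complex.I * (γ / 2) * (1 + doublePhase z)) with hw
  have hwγ : ‖w‖ ≤ |γ| := norm_shear_factor_le γ z
  have hlog : Real.log ‖shear γ z‖ - Real.log ‖z‖ = (Complex.log (1 + w)).re := by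
    have h1w : 1 + w ≠ 0 := fun h ↦ by
      have := norm_neg (1 : ℂ)
      rw [← eq_neg_of_add_eq_zero_right h, norm_one] at this
      linarith
    rw [shear_eq_mul, norm_mul, Real.log_mul (norm_ne_zero_iff.2 hz) (norm_ne_zero_iff.2 h1w),
      add_sub_cancel_left, Complex.log_re]
  have htaylor : γ / 2 * (doublePhase z).im + γ ^ 2 / 8 * ((1 + doublePhase z) ^ 2).re
      = (Complex.logTaylor (2 + 1) w).re := by
    have : Complex.logTaylor (2 + 1) w = w - w ^ 2 / 2 := by
      simp [Complex.logTaylor_succ, Complex.logTaylor_zero]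
      ring
    rw [this, hw]
    simp [sq]
    ring
  rw [hlog, htaylor, ← Complex.sub_re]
  calc |(Complex.log (1 + w) - Complex.logTaylor (2 + 1) w).re|
      ≤ ‖w‖ ^ (2 + 1) * (1 - ‖w‖)⁻¹ / ((2 : ℕ) + 1) :=
        (Complex.abs_re_le_norm _).trans (Complex.norm_log_sub_logTaylor_le 2 (by linarith))
    _ ≤ |γ| ^ 3 * (1 / 2)⁻¹ / ((2 : ℕ) + 1) := by
        have : (1 - ‖w‖)⁻¹ ≤ (1 / 2)⁻¹ := inv_anti₀ one_half_pos (by linarith)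
        have : 0 ≤ (1 - ‖w‖)⁻¹ := inv_nonneg.2 (by linarith)
        gcongr
    _ ≤ |γ| ^ 3 := by
        norm_num
        linarith [pow_nonneg (abs_nonneg γ) 3]

lemma norm_le_two_mul_norm_shear {γ : ℝ} (hγ : |γ| ≤ 1 / 2) (z : ℂ) :
    ‖z‖ ≤ 2 * ‖shear γ z‖ := by
  have h := (norm_sub_rev _ _).trans_le (norm_shear_sub_le γ z)
  have := norm_sub_norm_le z (shear γ z)
  nlinarith [norm_nonneg z]

lemma abs_re_shear_I_mul_div_add_le {γ : ℝ} (hγ : |γ| ≤ 1 / 2) {z : ℂ} (hz : z ≠ 0) :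
    |(shear γ (Complex.I * z) / shear γ z).re + γ * (doublePhase z).re| ≤ 2 * γ ^ 2 := by
  have hzS : ‖z‖ ≤ 2 * ‖shear γ z‖ := norm_le_two_mul_norm_shear hγ z
  have hS : 0 < ‖shear γ z‖ := by linarith [norm_pos_iff.2 hz]
  have hS0 : shear γ z ≠ 0 := norm_pos_iff.1 hS
  have hI : shear γ (Complex.I * z) = Complex.I * shear γ z - γ * conj z := by
    apply Complex.ext <;> simp [shear_apply]
  have hdiv : shear γ (Complex.I * z) / shear γ z + γ * doublePhase z
      = Complex.I + γ * (conj z * (shear γ z - z) / (z * shear γ z)) := by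
    rw [hI, doublePhase]
    field_simp
    ring
  calc |(shear γ (Complex.I * z) / shear γ z).re + γ * (doublePhase z).re|
      = |γ * (conj z * (shear γ z - z) / (z * shear γ z)).re| := by
        rw [← Complex.re_ofReal_mul, ← Complex.add_re, hdiv, Complex.add_re, Complex.I_re,
          zero_add, Complex.re_ofReal_mul]
    _ ≤ |γ| * (‖z‖ * (|γ| * ‖z‖) / (‖z‖ * ‖shear γ z‖)) := by
        rw [abs_mul]
        gcongr
        refine (Complex.abs_re_le_norm _).trans ?_
        rw [norm_div, norm_mul, norm_mul, Complex.norm_conj]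
        gcongr
        exact norm_shear_sub_le γ z
    _ ≤ |γ| * (‖z‖ * (|γ| * (2 * ‖shear γ z‖)) / (‖z‖ * ‖shear γ z‖)) := by gcongr
    _ = 2 * γ ^ 2 := by
        have := norm_pos_iff.2 hz
        rw [← sq_abs γ]
        field_simp

end Shear

section Wronskian

lemma im_conj_mul_map (f : ℂ →ₗ[ℝ] ℂ) (z w : ℂ) :
    (conj (f z) * f w).im = LinearMap.det f * (conj z * w).im := by
  have hf (z : ℂ) : f z = z.re * f 1 + z.im * f Complex.I := by
    conv_lhs => rw [← Complex.re_add_im z, ← mul_one (z.re : ℂ), ← Complex.real_smul,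
      ← Complex.real_smul, map_add, map_smul, map_smul, Complex.real_smul, Complex.real_smul]
  rw [← LinearMap.det_toMatrix Complex.basisOneI, Matrix.det_fin_two, hf z, hf w]
  simp [LinearMap.toMatrix_apply]
  ring

lemma map_ne_zero_of_det_ne_zero {f : ℂ →ₗ[ℝ] ℂ} (hf : LinearMap.det f ≠ 0) {z : ℂ} (hz : z ≠ 0) :
    f z ≠ 0 := by
  exact ((LinearMap.equivOfDetNeZero f hf).map_ne_zero_iff).2 hz

lemma det_shear (γ : ℝ) : LinearMap.det (shear γ) = 1 := by
  have h := im_conj_mul_map (shear γ) 1 Complex.I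
  simpa [shear_apply] using h.symm

end Wronskian

section Transfer

/-- The product of the first `n` transfer maps `shear (γ k) ∘ L k` in the complex Prüfer
coordinate. -/
noncomputable def transfer (L : ℕ → ℂ →ₗ[ℝ] ℂ) (γ : ℕ → ℝ) : ℕ → ℂ →ₗ[ℝ] ℂ
  | 0 => LinearMap.id
  | n + 1 => shear (γ n) ∘ₗ L n ∘ₗ transfer L γ n

variable {L : ℕ → ℂ →ₗ[ℝ] ℂ} {γ : ℕ → ℝ}

lemma transfer_succ_apply (n : ℕ) (v : ℂ) :
    transfer L γ (n + 1) v = shear (γ n) (L n (transfer L γ n v)) := rfl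

lemma det_transfer (n : ℕ) :
    LinearMap.det (transfer L γ n) = ∏ k ∈ Finset.range n, LinearMap.det (L k) := by
  induction n with
  | zero => simp [transfer]
  | succ n ih =>
    rw [transfer, LinearMap.det_comp, LinearMap.det_comp, det_shear, one_mul, ih,
      Finset.prod_range_succ, mul_comm]

lemma det_transfer_ne_zero (hdet : ∀ n, LinearMap.det (L n) ≠ 0) (n : ℕ) :
    LinearMap.det (transfer L γ n) ≠ 0 := by
  rw [det_transfer]
  exact Finset.prod_ne_zero_iff.2 fun k _ ↦ hdet k

lemma transfer_ne_zero (hdet : ∀ n, LinearMap.det (L n) ≠ 0) {v : ℂ} (hv : v ≠ 0) (n : ℕ) :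
    transfer L γ n v ≠ 0 :=
  map_ne_zero_of_det_ne_zero (det_transfer_ne_zero hdet n) hv

end Transfer

section PerturbedRotation

variable {f : ℂ →ₗ[ℝ] ℂ} {α : ℂ} {a : ℝ}

lemma norm_map_I_mul_sub_le (hf : ∀ z, ‖f z - α * z‖ ≤ a * ‖z‖) (z : ℂ) :
    ‖f (Complex.I * z) - Complex.I * f z‖ ≤ 2 * a * ‖z‖ := by
  calc ‖f (Complex.I * z) - Complex.I * f z‖
      = ‖(f (Complex.I * z) - α * (Complex.I * z)) - Complex.I * (f z - α * z)‖ := by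
        congr 1
        ring
    _ ≤ a * ‖Complex.I * z‖ + a * ‖z‖ := by
        refine norm_sub_le_of_le (hf _) ?_
        rw [norm_mul, Complex.norm_I, one_mul]
        exact hf z
    _ = 2 * a * ‖z‖ := by
        rw [norm_mul, Complex.norm_I]
        ring

lemma abs_det_sub_one_le (hα : ‖α‖ = 1) (hf : ∀ z, ‖f z - α * z‖ ≤ a * ‖z‖) :
    |LinearMap.det f - 1| ≤ 2 * a + a ^ 2 := by
  set u := f 1 - α
  set w := f Complex.I - α * Complex.I
  have hu : ‖u‖ ≤ a := by simpa using hf 1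
  have hw : ‖w‖ ≤ a := by simpa using hf Complex.I
  have hdet : LinearMap.det f - 1
      = (conj α * w + conj u * (α * Complex.I) + conj u * w).im := by
    have hαα : conj α * α = 1 := by simp [Complex.conj_mul', hα]
    calc LinearMap.det f - 1 = (conj (f 1) * f Complex.I - conj α * α * Complex.I).im := by
          rw [Complex.sub_im, im_conj_mul_map, hαα]
          simp
      _ = _ := by
          simp only [u, w, map_sub]
          congr 1
          ring
  rw [hdet]
  calc |(conj α * w + conj u * (α * Complex.I) + conj u * w).im|
      ≤ ‖conj α * w‖ + ‖conj u * (α * Complex.I)‖ + ‖conj u * w‖ :=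
        (Complex.abs_im_le_norm _).trans (norm_add₃_le ..)
    _ = ‖w‖ + ‖u‖ + ‖u‖ * ‖w‖ := by simp [hα]
    _ ≤ a + a + a * a := by
        have ha : 0 ≤ a := (norm_nonneg u).trans hu
        gcongr
    _ = 2 * a + a ^ 2 := by ring

lemma exists_tendsto_det_transfer {L : ℕ → ℂ →ₗ[ℝ] ℂ} {a : ℕ → ℝ} (hα : ‖α‖ = 1)
    (hL : ∀ n z, ‖L n z - α * z‖ ≤ a n * ‖z‖) (ha : Summable a)
    (hdet : ∀ n, LinearMap.det (L n) ≠ 0) :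
    ∃ D ≠ 0, ∀ γ : ℕ → ℝ, Tendsto (fun n ↦ LinearMap.det (transfer L γ n)) atTop (𝓝 D) := by
  have hsq : Summable fun n ↦ a n ^ 2 := by
    simpa only [sq] using ha.norm.mul_tendsto_const ha.tendsto_cofinite_zero
  have hsum : Summable fun n ↦ ‖LinearMap.det (L n) - 1‖ :=
    .of_nonneg_of_le (fun n ↦ norm_nonneg _) (fun n ↦ abs_det_sub_one_le hα (hL n))
      ((ha.mul_left 2).add hsq)
  refine ⟨∏' n, (1 + (LinearMap.det (L n) - 1)),
    tprod_one_add_ne_zero_of_summable (fun n ↦ by simpa using hdet n) hsum, fun γ ↦ ?_⟩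
  simpa only [det_transfer, add_sub_cancel] using
    (multipliable_one_add_of_summable hsum).hasProd.tendsto_prod_nat

end PerturbedRotation

section Growth

variable {α : ℂ}

lemma abs_norm_div_sub_one_le (hα : ‖α‖ = 1) {a : ℝ} {p z : ℂ} (hp : p ≠ 0)
    (hz : ‖z - α * p‖ ≤ a * ‖p‖) : |‖z‖ / ‖p‖ - 1| ≤ a := by
  have hp' : 0 < ‖p‖ := norm_pos_iff.2 hp
  rw [div_sub_one hp'.ne', abs_div, abs_norm, div_le_iff₀ hp']
  calc |‖z‖ - ‖p‖| = |‖z‖ - ‖α * p‖| := by rw [norm_mul, hα, one_mul]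
    _ ≤ a * ‖p‖ := (abs_norm_sub_norm_le _ _).trans hz

lemma norm_doublePhase_sub_rotated_le (hα : ‖α‖ = 1) {a γ : ℝ} {z w : ℂ} (hz : z ≠ 0)
    (hS : shear γ z ≠ 0) (hw : ‖w - α * shear γ z‖ ≤ a * ‖shear γ z‖) :
    ‖doublePhase w - doublePhase α * doublePhase z‖ ≤ 2 * (a + |γ|) := by
  set p := shear γ z
  have hα0 : α ≠ 0 := norm_ne_zero_iff.1 (hα ▸ one_ne_zero)
  calc ‖doublePhase w - doublePhase α * doublePhase z‖
      = ‖(doublePhase w - doublePhase (α * p))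
          + doublePhase α * (doublePhase p - doublePhase z)‖ := by
        rw [doublePhase_mul]
        congr 1
        ring
    _ ≤ 2 * a + 1 * (2 * |γ|) := by
        refine norm_add_le_of_le ((norm_doublePhase_sub_le _ (mul_ne_zero hα0 hS)).trans ?_) ?_
        · rw [norm_mul, hα, one_mul]
          gcongr
          exact (div_le_iff₀ (norm_pos_iff.2 hS)).2 hw
        · rw [norm_mul]
          gcongr
          · exact norm_doublePhase_le_one α
          · refine (norm_doublePhase_sub_le _ hz).trans ?_
            gcongr
            exact (div_le_iff₀ (norm_pos_iff.2 hz)).2 (norm_shear_sub_le γ z)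
    _ = 2 * (a + |γ|) := by ring

lemma norm_sq_sub_sq_le {x y : ℂ} (hx : ‖x‖ ≤ 1) (hy : ‖y‖ ≤ 1) :
    ‖x ^ 2 - y ^ 2‖ ≤ 2 * ‖x - y‖ := by
  rw [sq_sub_sq, norm_mul]
  gcongr
  linarith [norm_add_le x y]

variable {a γ : ℕ → ℝ} {p z : ℕ → ℂ}

lemma summable_log_norm_div (hα : ‖α‖ = 1) (ha : Summable a) (hp : ∀ n, p n ≠ 0)
    (hz : ∀ n, ‖z n - α * p n‖ ≤ a n * ‖p n‖) :
    Summable fun n ↦ Real.log (‖z n‖ / ‖p n‖) := by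
  have h : Summable fun n ↦ ‖z n‖ / ‖p n‖ - 1 :=
    .of_norm_bounded ha fun n ↦ abs_norm_div_sub_one_le hα (hp n) (hz n)
  simpa only [add_sub_cancel] using Real.summable_log_one_add_of_summable h

lemma tendsto_zero_of_summable_abs_pow_three {x : ℕ → ℝ} (hx : Summable fun n ↦ |x n| ^ 3) :
    Tendsto x atTop (𝓝 0) := by
  have h := hx.tendsto_atTop_zero.rpow_const (p := ((3 : ℕ) : ℝ)⁻¹) (.inr (by positivity))
  simp_rw [Real.pow_rpow_inv_natCast (abs_nonneg _) three_ne_zero] at h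
  exact (tendsto_zero_iff_abs_tendsto_zero x).2 (by simpa [Function.comp_def] using h)

lemma summable_log_norm_shear_remainder (hz : ∀ n, z n ≠ 0) (hγ : Summable fun n ↦ |γ n| ^ 3) :
    Summable fun n ↦ Real.log ‖shear (γ n) (z n)‖ - Real.log ‖z n‖
      - (γ n / 2 * (doublePhase (z n)).im
        + γ n ^ 2 / 8 * ((1 + doublePhase (z n)) ^ 2).re) := by
  have hsmall : ∀ᶠ n in atTop, |γ n| ^ 3 ≤ (1 / 2) ^ 3 :=
    hγ.tendsto_atTop_zero.eventually_le_const (by norm_num)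
  refine .of_norm_bounded_eventually_nat hγ ?_
  filter_upwards [hsmall] with n hn
  exact abs_log_norm_shear_sub_le
    (le_of_pow_le_pow_left₀ three_ne_zero one_half_pos.le hn) (hz n)

lemma norm_doublePhase_succ_sub_le (hα : ‖α‖ = 1) (hp : ∀ n, p n ≠ 0)
    (hz : ∀ n, ‖z n - α * p n‖ ≤ a n * ‖p n‖) (hstep : ∀ n, p (n + 1) = shear (γ n) (z n)) (n : ℕ) :
    ‖doublePhase (z (n + 1)) - doublePhase α * doublePhase (z n)‖ ≤ 2 * (a (n + 1) + |γ n|) := by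
  have hS : shear (γ n) (z n) ≠ 0 := hstep n ▸ hp (n + 1)
  refine norm_doublePhase_sub_rotated_le hα (fun h ↦ hS (by rw [h, map_zero])) hS ?_
  rw [← hstep]
  exact hz (n + 1)

lemma summable_div_natCast_succ (ha : Summable a) : Summable fun n : ℕ ↦ a n / (n + 1) := by
  refine .of_norm_bounded ha.norm fun n ↦ ?_
  rw [norm_div]
  refine div_le_self (norm_nonneg _) ?_
  rw [Real.norm_of_nonneg (by positivity)]
  linarith [n.cast_nonneg (α := ℝ)]

lemma summable_conditional_inv_smul_doublePhase (hα : ‖α‖ = 1) (hα2 : doublePhase α ≠ 1)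
    (ha : Summable a) (hγ : Summable fun n : ℕ ↦ |γ n| / (n + 1)) (hp : ∀ n, p n ≠ 0)
    (hz : ∀ n, ‖z n - α * p n‖ ≤ a n * ‖p n‖) (hstep : ∀ n, p (n + 1) = shear (γ n) (z n)) :
    Summable (fun n : ℕ ↦ ((n : ℝ) + 1)⁻¹ • doublePhase (z n)) (conditional ℕ) := by
  have hη := ((summable_div_natCast_succ ((summable_nat_add_iff 1).2 ha)).add hγ).mul_left 2
  simp_rw [← add_div, ← mul_div_assoc] at hη
  exact summable_conditional_inv_smul_of_almost_rotating hα2 (fun n ↦ norm_doublePhase_le_one _)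
    (norm_doublePhase_succ_sub_le hα hp hz hstep) hη

lemma summable_conditional_inv_smul_doublePhase_sq (hα : ‖α‖ = 1) (hα4 : doublePhase α ^ 2 ≠ 1)
    (ha : Summable a) (hγ : Summable fun n : ℕ ↦ |γ n| / (n + 1)) (hp : ∀ n, p n ≠ 0)
    (hz : ∀ n, ‖z n - α * p n‖ ≤ a n * ‖p n‖) (hstep : ∀ n, p (n + 1) = shear (γ n) (z n)) :
    Summable (fun n : ℕ ↦ ((n : ℝ) + 1)⁻¹ • doublePhase (z n) ^ 2) (conditional ℕ) := by
  have hη := (((summable_div_natCast_succ ((summable_nat_add_iff 1).2 ha)).add hγ).mul_left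
    2).mul_left 2
  simp_rw [← add_div, ← mul_div_assoc] at hη
  have hζ (n : ℕ) : ‖doublePhase (z n)‖ ≤ 1 := norm_doublePhase_le_one _
  refine summable_conditional_inv_smul_of_almost_rotating hα4 (fun n ↦ ?_) (fun n ↦ ?_) hη
  · rw [norm_pow]
    exact pow_le_one₀ (norm_nonneg _) (hζ n)
  · rw [← mul_pow, ← doublePhase_mul]
    refine (norm_sq_sub_sq_le (hζ _) (norm_doublePhase_le_one _)).trans ?_
    rw [doublePhase_mul]
    gcongr
    exact norm_doublePhase_succ_sub_le hα hp hz hstep n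

theorem tendsto_log_norm_div_log {σ : ℝ} (hα : ‖α‖ = 1) (hα4 : doublePhase α ^ 2 ≠ 1)
    (ha : Summable a) (hp : ∀ n, p n ≠ 0) (hz : ∀ n, ‖z n - α * p n‖ ≤ a n * ‖p n‖)
    (hstep : ∀ n, p (n + 1) = shear (γ n) (z n))
    (hγ3 : Summable fun n ↦ |γ n| ^ 3) (hγ1 : Summable fun n : ℕ ↦ |γ n| / (n + 1))
    (hlin : Summable (fun n : ℕ ↦ (harmonic (n + 1) : ℝ)⁻¹ * (doublePhase (z n)).im * γ n)
      (conditional ℕ))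
    (hquad : Summable (fun n : ℕ ↦ ((1 + doublePhase (z n)) ^ 2).re * (γ n ^ 2 - σ / (n + 1)))
      (conditional ℕ)) :
    Tendsto (fun n ↦ Real.log ‖p n‖ / Real.log n) atTop (𝓝 (σ / 8)) := by
  have hz0 (n : ℕ) : z n ≠ 0 := fun h ↦ hp (n + 1) (by rw [hstep, h, map_zero])
  have hα2 : doublePhase α ≠ 1 := fun h ↦ hα4 (by rw [h, one_pow])
  have hratio := summable_log_norm_div hα ha hp hz
  have hrem := summable_log_norm_shear_remainder hz0 hγ3
  have hre := ((summable_conditional_inv_smul_doublePhase hα hα2 ha hγ1 hp hz hstep).map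
    Complex.reCLM Complex.reCLM.continuous).mul_left (σ / 4)
  have hre2 := ((summable_conditional_inv_smul_doublePhase_sq hα hα4 ha hγ1 hp hz hstep).map
    Complex.reCLM Complex.reCLM.continuous).mul_left (σ / 8)
  refine tendsto_div_log_of_increments (m := fun n ↦ 1 / 2 * ((doublePhase (z n)).im * γ n))
    (fun n ↦ ?_) (((((summable_conditional_of_summable (hratio.add hrem)).add
      (hquad.mul_left (1 / 8))).add hre).add hre2)) ((hlin.mul_left (1 / 2)).congr fun n ↦ by ring)
  simp only [Function.comp_apply, Complex.reCLM_apply, Complex.smul_re, smul_eq_mul]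
  rw [hstep, Real.log_div (norm_ne_zero_iff.2 (hz0 n)) (norm_ne_zero_iff.2 (hp n)),
    one_add_sq_re]
  field_simp
  ring

end Growth

section PolynomialRates

lemma eventually_le_rpow_of_tendsto_log_div_log {f : ℕ → ℝ} {c r : ℝ} (hf : ∀ n, 0 < f n)
    (h : Tendsto (fun n ↦ Real.log (f n) / Real.log n) atTop (𝓝 c)) (hr : c < r) :
    ∀ᶠ n : ℕ in atTop, f n ≤ ((n : ℝ) + 1) ^ r := by
  have hlim : Tendsto (fun n : ℕ ↦ Real.log n * (Real.log (f n) / Real.log n - r)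
      + -r * (Real.log (n + 1) - Real.log n)) atTop atBot :=
    (tendsto_log_natCast_atTop.atTop_mul_neg (sub_neg.2 hr) (h.sub_const r)).atBot_add
      (Real.tendsto_log_nat_add_one_sub_log.const_mul (-r))
  filter_upwards [hlim.eventually_le_atBot 0, tendsto_log_natCast_atTop.eventually_gt_atTop 0]
    with n hn hlog
  rw [← Real.log_le_log_iff (hf n) (by positivity), Real.log_rpow (by positivity)]
  have : Real.log n * (Real.log (f n) / Real.log n - r) = Real.log (f n) - r * Real.log n := by
    field_simp
  linarith

lemma tendsto_natCast_add_one_rpow_atTop {κ : ℝ} (hκ : 0 < κ) :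
    Tendsto (fun n : ℕ ↦ ((n : ℝ) + 1) ^ κ) atTop atTop :=
  (tendsto_rpow_atTop hκ).comp (tendsto_atTop_add_const_right _ 1 tendsto_natCast_atTop_atTop)

lemma monotone_natCast_add_one_rpow {κ : ℝ} (hκ : 0 ≤ κ) :
    Monotone fun n : ℕ ↦ ((n : ℝ) + 1) ^ κ := fun m n hmn ↦ by
  have : (m : ℝ) ≤ n := Nat.cast_le.2 hmn
  dsimp only
  gcongr

lemma summable_natCast_add_one_rpow {r : ℝ} (hr : r < -1) :
    Summable fun n : ℕ ↦ ((n : ℝ) + 1) ^ r := by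
  simpa using (summable_nat_add_iff 1).2 (Real.summable_nat_rpow.2 hr)

lemma tendsto_const_div_log_natCast (c : ℝ) :
    Tendsto (fun n : ℕ ↦ c / Real.log n) atTop (𝓝 0) :=
  tendsto_log_natCast_atTop.const_div_atTop c

lemma log_div_log_le_of_le_div_rpow {P R K κ : ℝ} {n : ℕ} (hn : 0 < Real.log n) (hP : 0 < P)
    (hR : 0 < R) (hκ : 0 ≤ κ) (h : R ≤ K * P / ((n : ℝ) + 1) ^ κ) :
    Real.log R / Real.log n ≤ Real.log K / Real.log n + Real.log P / Real.log n - κ := by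
  have hn0 : (0 : ℝ) < n := by
    refine Nat.cast_pos.2 (Nat.pos_of_ne_zero ?_)
    rintro rfl
    simp at hn
  have hpow : 0 < ((n : ℝ) + 1) ^ κ := by positivity
  have hK : 0 < K := by
    by_contra! hK
    have : K * P / ((n : ℝ) + 1) ^ κ ≤ 0 :=
      div_nonpos_of_nonpos_of_nonneg (mul_nonpos_of_nonpos_of_nonneg hK hP.le) hpow.le
    linarith
  have hlog : Real.log R ≤ Real.log K + Real.log P - κ * Real.log n := by
    calc Real.log R ≤ Real.log (K * P / ((n : ℝ) + 1) ^ κ) := Real.log_le_log hR h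
      _ = Real.log K + Real.log P - κ * Real.log (n + 1) := by
        rw [Real.log_div (by positivity) hpow.ne', Real.log_mul hK.ne' hP.ne',
          Real.log_rpow (by positivity)]
      _ ≤ Real.log K + Real.log P - κ * Real.log n := by
        gcongr
        linarith
  rw [← add_div, ← mul_div_cancel_right₀ κ hn.ne', ← sub_div]
  gcongr

/- The lower bound `R ≥ d / P` comes from the Wronskian, the upper bound from the rates `κ`
arbitrarily close to `2 β`. -/
theorem tendsto_log_div_log_neg_of_wronskian {P R : ℕ → ℝ} {β d : ℝ} (hβ : 0 < β)
    (hP : ∀ n, 0 < P n) (hR : ∀ n, 0 < R n)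
    (hlog : Tendsto (fun n ↦ Real.log (P n) / Real.log n) atTop (𝓝 β)) (hd : 0 < d)
    (hPR : ∀ᶠ n in atTop, d ≤ P n * R n)
    (hdecay : ∀ κ : ℚ, 0 < (κ : ℝ) → (κ : ℝ) < 2 * β →
      ∃ K, ∀ᶠ n : ℕ in atTop, R n ≤ K * P n / ((n : ℝ) + 1) ^ (κ : ℝ)) :
    Tendsto (fun n ↦ Real.log (R n) / Real.log n) atTop (𝓝 (-β)) := by
  have hlogpos := tendsto_log_natCast_atTop.eventually_gt_atTop 0
  refine tendsto_order.2 ⟨fun c hc ↦ ?_, fun c hc ↦ ?_⟩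
  · have hlower : Tendsto (fun n : ℕ ↦ Real.log d / Real.log n - Real.log (P n) / Real.log n)
        atTop (𝓝 (-β)) := by
      simpa using (tendsto_const_div_log_natCast (Real.log d)).sub hlog
    filter_upwards [hlower.eventually_const_lt hc, hPR, hlogpos] with n hn hPRn hlogn
    refine hn.trans_le ?_
    rw [← sub_div]
    gcongr
    rw [sub_le_iff_le_add', ← Real.log_mul (hP n).ne' (hR n).ne']
    exact Real.log_le_log hd hPRn
  · obtain ⟨κ, hκ, hκβ⟩ := exists_rat_btwn
      (show max 0 (β - c) < 2 * β from max_lt (by linarith) (by linarith))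
    obtain ⟨hκ0, hκc⟩ := max_lt_iff.1 hκ
    obtain ⟨K, hK⟩ := hdecay κ hκ0 hκβ
    have hupper : Tendsto (fun n : ℕ ↦ Real.log K / Real.log n + Real.log (P n) / Real.log n - κ)
        atTop (𝓝 (β - κ)) := by
      simpa using ((tendsto_const_div_log_natCast (Real.log K)).add hlog).sub_const (κ : ℝ)
    filter_upwards [hupper.eventually_lt_const (sub_lt_comm.1 hκc), hK, hlogpos] with n hn hKn hlogn
    exact (log_div_log_le_of_le_div_rpow hlogn (hP n) (hR n) hκ0.le hKn).trans_lt hn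

end PolynomialRates

section Subordinate

lemma im_div_eq (q p : ℂ) : (q / p).im = (conj p * q).im / ‖p‖ ^ 2 := by
  have h : q / p = conj p * q / ((‖p‖ ^ 2 : ℝ) : ℂ) := by
    rcases eq_or_ne p 0 with rfl | hp
    · simp
    · rw [Complex.ofReal_pow, ← Complex.conj_mul', mul_div_mul_left]
      simpa using hp
  rw [h, Complex.div_ofReal_im]

section OneStep

variable {f : ℂ →ₗ[ℝ] ℂ} {α : ℂ} {a γ : ℝ}

lemma norm_le_two_mul_norm_map (hα : ‖α‖ = 1) (hf : ∀ z, ‖f z - α * z‖ ≤ a * ‖z‖)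
    (ha : a ≤ 1 / 2) (z : ℂ) : ‖z‖ ≤ 2 * ‖f z‖ := by
  have h := norm_sub_norm_le (α * z) (f z)
  rw [norm_mul, hα, one_mul, norm_sub_rev] at h
  nlinarith [hf z, norm_nonneg z]

lemma abs_re_shear_map_I_mul_div_add_le (hα : ‖α‖ = 1) (hf : ∀ z, ‖f z - α * z‖ ≤ a * ‖z‖)
    (ha : a ≤ 1 / 2) (hγ : |γ| ≤ 1 / 2) {p : ℂ} (hp : p ≠ 0) :
    |(shear γ (f (Complex.I * p)) / shear γ (f p)).re + γ * (doublePhase (f p)).re|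
      ≤ 2 * γ ^ 2 + 12 * a := by
  have ha0 : 0 ≤ a := by simpa using (norm_nonneg _).trans (hf 1)
  set z := f p
  set e := f (Complex.I * p) - Complex.I * z with he
  have hpz : ‖p‖ ≤ 2 * ‖z‖ := norm_le_two_mul_norm_map hα hf ha p
  have hz : 0 < ‖z‖ := by linarith [norm_pos_iff.2 hp]
  have hzS : ‖z‖ ≤ 2 * ‖shear γ z‖ := norm_le_two_mul_norm_shear hγ z
  have hS : 0 < ‖shear γ z‖ := by linarith
  have hep : ‖e‖ ≤ 2 * a * ‖p‖ := norm_map_I_mul_sub_le hf p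
  have hSe : ‖shear γ e / shear γ z‖ ≤ 12 * a := by
    rw [norm_div, div_le_iff₀ hS]
    calc ‖shear γ e‖ = ‖(shear γ e - e) + e‖ := by rw [sub_add_cancel]
      _ ≤ 1 / 2 * ‖e‖ + ‖e‖ := by
        refine norm_add_le_of_le ((norm_shear_sub_le γ e).trans ?_) le_rfl
        gcongr
      _ ≤ 12 * a * ‖shear γ z‖ := by
        nlinarith
  calc |(shear γ (f (Complex.I * p)) / shear γ z).re + γ * (doublePhase z).re|
      = |((shear γ (Complex.I * z) / shear γ z).re + γ * (doublePhase z).re)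
          + (shear γ e / shear γ z).re| := by
        rw [← add_sub_cancel (Complex.I * z) (f (Complex.I * p)), ← he, map_add, add_div,
          Complex.add_re]
        ring_nf
    _ ≤ 2 * γ ^ 2 + 12 * a :=
        (abs_add_le _ _).trans (add_le_add (abs_re_shear_I_mul_div_add_le hγ (norm_pos_iff.1 hz))
          ((Complex.abs_re_le_norm _).trans hSe))

lemma map_div_map_eq (f : ℂ →ₗ[ℝ] ℂ) {p q : ℂ} (hp : p ≠ 0) (hfp : f p ≠ 0) :
    f q / f p = (q / p).re + (q / p).im * (f (Complex.I * p) / f p) := by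
  have hq : q = (q / p).re • p + (q / p).im • (Complex.I * p) := by
    simp only [Complex.real_smul]
    calc q = q / p * p := (div_mul_cancel₀ q hp).symm
      _ = ((q / p).re + (q / p).im * Complex.I) * p := by rw [Complex.re_add_im]
      _ = _ := by ring
  have hfq : f q = (q / p).re * f p + (q / p).im * f (Complex.I * p) := by
    conv_lhs => rw [hq, map_add, map_smul, map_smul, Complex.real_smul, Complex.real_smul]
  rw [hfq]
  field_simp

end OneStep

variable {L : ℕ → ℂ →ₗ[ℝ] ℂ} {α : ℂ} {a b γ : ℕ → ℝ} {p q : ℕ → ℂ}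

lemma re_div_succ_sub (hp : ∀ n, p n ≠ 0) (hpstep : ∀ n, p (n + 1) = shear (γ n) (L n (p n)))
    (hqstep : ∀ n, q (n + 1) = shear (γ n) (L n (q n))) (n : ℕ) :
    (q (n + 1) / p (n + 1)).re - (q n / p n).re = (q n / p n).im *
      (shear (γ n) (L n (Complex.I * p n)) / shear (γ n) (L n (p n))).re := by
  have h := map_div_map_eq (shear (γ n) ∘ₗ L n) (q := q n) (hp n) (hpstep n ▸ hp (n + 1))
  rw [hqstep, hpstep]
  simp only [LinearMap.comp_apply] at h
  rw [h, Complex.add_re, Complex.ofReal_re, Complex.re_ofReal_mul, add_sub_cancel_left]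

theorem summable_conditional_smul_re_div_increments (hα : ‖α‖ = 1) (ha : Summable a)
    (hL : ∀ n z, ‖L n z - α * z‖ ≤ a n * ‖z‖) (hp : ∀ n, p n ≠ 0)
    (hpstep : ∀ n, p (n + 1) = shear (γ n) (L n (p n)))
    (hqstep : ∀ n, q (n + 1) = shear (γ n) (L n (q n))) (hγ : Tendsto γ atTop (𝓝 0))
    (hb : ∀ᶠ n in atTop, |b n * (q n / p n).im| ≤ 1)
    (hquad : Summable fun n ↦ |b n * (q n / p n).im| * γ n ^ 2)
    (hlin : Summable (fun n ↦ b n * (q n / p n).im * (doublePhase (L n (p n))).re * γ n)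
      (conditional ℕ)) :
    Summable (fun n ↦ b n • ((q (n + 1) / p (n + 1)).re - (q n / p n).re)) (conditional ℕ) := by
  have hrem : Summable fun n ↦ b n * (q n / p n).im *
      ((shear (γ n) (L n (Complex.I * p n)) / shear (γ n) (L n (p n))).re
        + γ n * (doublePhase (L n (p n))).re) := by
    refine .of_norm_bounded_eventually_nat ((hquad.mul_left 2).add (ha.mul_left 12)) ?_
    have hγs : ∀ᶠ n in atTop, |γ n| ≤ 1 / 2 :=
      (by simpa using hγ.abs : Tendsto (|γ ·|) atTop (𝓝 0)).eventually_le_const one_half_pos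
    filter_upwards [hγs, ha.tendsto_atTop_zero.eventually_le_const one_half_pos, hb]
      with n hγn han hbn
    rw [norm_mul, Real.norm_eq_abs, Real.norm_eq_abs]
    calc _ ≤ |b n * (q n / p n).im| * (2 * γ n ^ 2 + 12 * a n) := by
          gcongr
          exact abs_re_shear_map_I_mul_div_add_le hα (hL n) han hγn (hp n)
      _ ≤ 2 * (|b n * (q n / p n).im| * γ n ^ 2) + 12 * a n := by
          have ha0 : 0 ≤ a n := by simpa using (norm_nonneg _).trans (hL n 1)
          nlinarith
  refine ((summable_conditional_of_summable hrem).sub hlin).congr fun n ↦ ?_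
  rw [smul_eq_mul, re_div_succ_sub hp hpstep hqstep]
  ring

theorem exists_norm_div_sub_le (hα : ‖α‖ = 1) (ha : Summable a)
    (hL : ∀ n z, ‖L n z - α * z‖ ≤ a n * ‖z‖) (hp : ∀ n, p n ≠ 0)
    (hpstep : ∀ n, p (n + 1) = shear (γ n) (L n (p n)))
    (hqstep : ∀ n, q (n + 1) = shear (γ n) (L n (q n))) (hγ : Tendsto γ atTop (𝓝 0))
    (hbpos : ∀ n, 0 < b n) (hbmono : Monotone b) (hbtop : Tendsto b atTop atTop)
    (hb : ∀ᶠ n in atTop, |b n * (q n / p n).im| ≤ 1)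
    (hquad : Summable fun n ↦ |b n * (q n / p n).im| * γ n ^ 2)
    (hlin : Summable (fun n ↦ b n * (q n / p n).im * (doublePhase (L n (p n))).re * γ n)
      (conditional ℕ)) :
    ∃ l K : ℝ, ∀ᶠ n in atTop, ‖q n / p n - l‖ ≤ K / b n := by
  obtain ⟨l, K, hK⟩ := exists_norm_sub_le_div_of_summable_smul_increments
    (T := fun n ↦ (q n / p n).re) hbpos hbmono hbtop
    (summable_conditional_smul_re_div_increments hα ha hL hp hpstep hqstep hγ hb hquad hlin)
  refine ⟨l, K + 1, ?_⟩
  filter_upwards [hb] with n hn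
  rw [abs_mul, abs_of_pos (hbpos n), mul_comm, ← le_div_iff₀ (hbpos n)] at hn
  calc ‖q n / p n - l‖ ≤ |(q n / p n - l).re| + |(q n / p n - l).im| :=
        Complex.norm_le_abs_re_add_abs_im _
    _ ≤ K / b n + 1 / b n := by
        rw [Complex.sub_re, Complex.sub_im, Complex.ofReal_re, Complex.ofReal_im, sub_zero]
        exact add_le_add (hK n) hn
    _ = (K + 1) / b n := by rw [add_div]

end Subordinate

section TransferRatio

/-- The ratio of the orbits of `I` and `1` under the transfer maps. Its imaginary part is a
Wronskian, and its limit `l` singles out the initial vector `I - l` of the subordinate orbit. -/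
noncomputable def transferRatio (L : ℕ → ℂ →ₗ[ℝ] ℂ) (γ : ℕ → ℝ) (n : ℕ) : ℂ :=
  transfer L γ n Complex.I / transfer L γ n 1

variable {L : ℕ → ℂ →ₗ[ℝ] ℂ} {α : ℂ} {a γ : ℕ → ℝ} {β : ℝ}

lemma im_transferRatio (n : ℕ) :
    (transferRatio L γ n).im = LinearMap.det (transfer L γ n) / ‖transfer L γ n 1‖ ^ 2 := by
  rw [transferRatio, im_div_eq, im_conj_mul_map]
  simp

lemma norm_transfer_I_sub (hdet : ∀ n, LinearMap.det (L n) ≠ 0) (l : ℝ) (n : ℕ) :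
    ‖transfer L γ n (Complex.I - l)‖ = ‖transfer L γ n 1‖ * ‖transferRatio L γ n - l‖ := by
  have hp : transfer L γ n 1 ≠ 0 := transfer_ne_zero hdet one_ne_zero n
  have hl : (l : ℂ) = l • (1 : ℂ) := by simp
  rw [← norm_mul, hl, map_sub, map_smul, ← hl, Complex.real_smul, transferRatio]
  congr 1
  field_simp

lemma tendsto_log_abs_im_transferRatio (hα : ‖α‖ = 1) (ha : Summable a)
    (hL : ∀ n z, ‖L n z - α * z‖ ≤ a n * ‖z‖) (hdet : ∀ n, LinearMap.det (L n) ≠ 0)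
    (hgrowth : Tendsto (fun n ↦ Real.log ‖transfer L γ n 1‖ / Real.log n) atTop (𝓝 β)) :
    Tendsto (fun n ↦ Real.log |(transferRatio L γ n).im| / Real.log n) atTop (𝓝 (-(2 * β))) := by
  obtain ⟨D, hD0, hD⟩ := exists_tendsto_det_transfer hα hL ha hdet
  have hlogdet : Tendsto (fun n : ℕ ↦ Real.log (LinearMap.det (transfer L γ n)) / Real.log n) atTop
      (𝓝 0) := ((hD γ).log hD0).div_atTop tendsto_log_natCast_atTop
  refine (by simpa using hlogdet.sub (hgrowth.const_mul 2) : Tendsto _ _ _).congr fun n ↦ ?_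
  rw [im_transferRatio, Real.log_abs, Real.log_div (det_transfer_ne_zero hdet n)
    (pow_ne_zero 2 (norm_ne_zero_iff.2 (transfer_ne_zero hdet one_ne_zero n))), Real.log_pow]
  push_cast
  ring

lemma eventually_abs_rpow_mul_im_transferRatio_le (hα : ‖α‖ = 1) (ha : Summable a)
    (hL : ∀ n z, ‖L n z - α * z‖ ≤ a n * ‖z‖) (hdet : ∀ n, LinearMap.det (L n) ≠ 0)
    (hgrowth : Tendsto (fun n ↦ Real.log ‖transfer L γ n 1‖ / Real.log n) atTop (𝓝 β))
    {κ s : ℝ} (hκs : κ + s < 2 * β) :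
    ∀ᶠ n : ℕ in atTop,
      |((n : ℝ) + 1) ^ κ * (transferRatio L γ n).im| ≤ ((n : ℝ) + 1) ^ (-s) := by
  have him (n : ℕ) : 0 < |(transferRatio L γ n).im| := by
    rw [abs_pos, im_transferRatio]
    exact div_ne_zero (det_transfer_ne_zero hdet n)
      (pow_ne_zero 2 (norm_ne_zero_iff.2 (transfer_ne_zero hdet one_ne_zero n)))
  filter_upwards [eventually_le_rpow_of_tendsto_log_div_log him
    (tendsto_log_abs_im_transferRatio hα ha hL hdet hgrowth) (neg_lt_neg hκs)] with n hn
  have hpos : (0 : ℝ) < (n : ℝ) + 1 := by positivity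
  calc |((n : ℝ) + 1) ^ κ * (transferRatio L γ n).im|
      ≤ ((n : ℝ) + 1) ^ κ * ((n : ℝ) + 1) ^ (-(κ + s)) := by
        rw [abs_mul, abs_of_pos (Real.rpow_pos_of_pos hpos κ)]
        gcongr
    _ = ((n : ℝ) + 1) ^ (-s) := by
        rw [← Real.rpow_add hpos]
        ring_nf

theorem exists_norm_transferRatio_sub_le (hα : ‖α‖ = 1) (ha : Summable a)
    (hL : ∀ n z, ‖L n z - α * z‖ ≤ a n * ‖z‖) (hdet : ∀ n, LinearMap.det (L n) ≠ 0)
    (hgrowth : Tendsto (fun n ↦ Real.log ‖transfer L γ n 1‖ / Real.log n) atTop (𝓝 β))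
    (hγ : Tendsto γ atTop (𝓝 0)) {κ s : ℝ} (hκ : 0 < κ) (hs : 0 < s) (hκs : κ + s < 2 * β)
    (hquad : Summable fun n : ℕ ↦ ((n : ℝ) + 1) ^ (-s) * γ n ^ 2)
    (hlin : Summable (fun n : ℕ ↦ ((n : ℝ) + 1) ^ κ * (transferRatio L γ n).im *
      (doublePhase (L n (transfer L γ n 1))).re * γ n) (conditional ℕ)) :
    ∃ l K : ℝ, ∀ᶠ n : ℕ in atTop, ‖transferRatio L γ n - l‖ ≤ K / ((n : ℝ) + 1) ^ κ := by
  have hsmall := eventually_abs_rpow_mul_im_transferRatio_le hα ha hL hdet hgrowth hκs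
  refine exists_norm_div_sub_le (b := fun n : ℕ ↦ ((n : ℝ) + 1) ^ κ) hα ha hL
    (transfer_ne_zero hdet one_ne_zero) (transfer_succ_apply · 1) (transfer_succ_apply · Complex.I)
    hγ (fun n ↦ by positivity) (monotone_natCast_add_one_rpow hκ.le)
    (tendsto_natCast_add_one_rpow_atTop hκ) ?_ ?_ hlin
  · filter_upwards [hsmall] with n hn
    exact hn.trans (Real.rpow_le_one_of_one_le_of_nonpos (by simp) (neg_nonpos.2 hs.le))
  · refine .of_norm_bounded_eventually_nat hquad ?_
    filter_upwards [hsmall] with n hn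
    rw [Real.norm_of_nonneg (by positivity)]
    gcongr
    exact hn

lemma exists_forall_of_decay (hβ : 0 < β)
    (hdecay : ∀ κ : ℚ, 0 < (κ : ℝ) → (κ : ℝ) < 2 * β →
      ∃ l K : ℝ, ∀ᶠ n : ℕ in atTop, ‖transferRatio L γ n - l‖ ≤ K / ((n : ℝ) + 1) ^ (κ : ℝ)) :
    ∃ l : ℝ, ∀ κ : ℚ, 0 < (κ : ℝ) → (κ : ℝ) < 2 * β →
      ∃ K : ℝ, ∀ᶠ n : ℕ in atTop, ‖transferRatio L γ n - l‖ ≤ K / ((n : ℝ) + 1) ^ (κ : ℝ) := by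
  have hlim {l K κ : ℝ} (hκ : 0 < κ)
      (h : ∀ᶠ n : ℕ in atTop, ‖transferRatio L γ n - l‖ ≤ K / ((n : ℝ) + 1) ^ κ) :
      Tendsto (transferRatio L γ) atTop (𝓝 l) :=
    tendsto_iff_norm_sub_tendsto_zero.2 <| squeeze_zero' (.of_forall fun n ↦ norm_nonneg _) h <|
      (tendsto_natCast_add_one_rpow_atTop hκ).const_div_atTop K
  obtain ⟨κ₀, hκ₀, hκ₀β⟩ := exists_rat_btwn (show (0 : ℝ) < 2 * β by positivity)
  obtain ⟨l, K₀, hK₀⟩ := hdecay κ₀ hκ₀ hκ₀β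
  refine ⟨l, fun κ hκ hκβ ↦ ?_⟩
  obtain ⟨l', K, hK⟩ := hdecay κ hκ hκβ
  obtain rfl : l' = l := Complex.ofReal_injective (tendsto_nhds_unique (hlim hκ hK) (hlim hκ₀ hK₀))
  exact ⟨K, hK⟩

lemma abs_det_transfer_le (l : ℝ) (n : ℕ) : |LinearMap.det (transfer L γ n)|
    ≤ ‖transfer L γ n 1‖ * ‖transfer L γ n (Complex.I - l)‖ := by
  have h := im_conj_mul_map (transfer L γ n) 1 (Complex.I - l)
  simp only [map_one, one_mul, Complex.sub_im, Complex.I_im, Complex.ofReal_im, sub_zero,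
    mul_one] at h
  rw [← h, ← Complex.norm_conj (transfer L γ n 1), ← norm_mul]
  exact Complex.abs_im_le_norm _

theorem exists_tendsto_log_norm_transfer (hα : ‖α‖ = 1) (ha : Summable a)
    (hL : ∀ n z, ‖L n z - α * z‖ ≤ a n * ‖z‖) (hdet : ∀ n, LinearMap.det (L n) ≠ 0) (hβ : 0 < β)
    (hgrowth : Tendsto (fun n ↦ Real.log ‖transfer L γ n 1‖ / Real.log n) atTop (𝓝 β))
    (hdecay : ∀ κ : ℚ, 0 < (κ : ℝ) → (κ : ℝ) < 2 * β →
      ∃ l K : ℝ, ∀ᶠ n : ℕ in atTop, ‖transferRatio L γ n - l‖ ≤ K / ((n : ℝ) + 1) ^ (κ : ℝ)) :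
    ∃ v ≠ 0, Tendsto (fun n ↦ Real.log ‖transfer L γ n v‖ / Real.log n) atTop (𝓝 (-β)) := by
  obtain ⟨l, hl⟩ := exists_forall_of_decay hβ hdecay
  obtain ⟨D, hD0, hD⟩ := exists_tendsto_det_transfer hα hL ha hdet
  have hv : Complex.I - l ≠ 0 := fun h ↦ by simpa using congrArg Complex.im h
  have hpos {v : ℂ} (hv : v ≠ 0) (n : ℕ) : 0 < ‖transfer L γ n v‖ :=
    norm_pos_iff.2 (transfer_ne_zero hdet hv n)
  have hwronskian : ∀ᶠ n in atTop,
      |D| / 2 ≤ ‖transfer L γ n 1‖ * ‖transfer L γ n (Complex.I - l)‖ := by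
    filter_upwards [(hD γ).abs.eventually_const_le (half_lt_self (abs_pos.2 hD0))] with n hn
    exact hn.trans (abs_det_transfer_le l n)
  refine ⟨_, hv, tendsto_log_div_log_neg_of_wronskian hβ (hpos one_ne_zero) (hpos hv) hgrowth
    (half_pos (abs_pos.2 hD0)) hwronskian fun κ hκ hκβ ↦ ?_⟩
  obtain ⟨K, hK⟩ := hl κ hκ hκβ
  refine ⟨K, hK.mono fun n hn ↦ ?_⟩
  rw [norm_transfer_I_sub hdet, mul_comm K, mul_div_assoc]
  gcongr

end TransferRatio

section MartingaleDifferences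

variable {Ω : Type*} {m0 : MeasurableSpace Ω} {μ : Measure Ω} [IsFiniteMeasure μ]

lemma integral_mul_eq_zero_of_condExp_eq_zero {m : MeasurableSpace Ω} (hm : m ≤ m0) {S d : Ω → ℝ}
    (hS : StronglyMeasurable[m] S) (hSL : MemLp S 2 μ) (hd : MemLp d 2 μ)
    (hcond : μ[d | m] =ᵐ[μ] 0) : ∫ ω, S ω * d ω ∂μ = 0 := by
  have hSd : Integrable (S * d) μ := hSL.integrable_mul hd
  calc ∫ ω, S ω * d ω ∂μ = ∫ ω, (μ[S * d | m]) ω ∂μ := (integral_condExp hm).symm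
    _ = ∫ _, 0 ∂μ := by
      refine integral_congr_ae ?_
      filter_upwards [condExp_mul_of_stronglyMeasurable_left hS hSd (hd.integrable one_le_two),
        hcond] with ω h₁ h₂
      rw [h₁, Pi.mul_apply, h₂, Pi.zero_apply, mul_zero]
    _ = 0 := integral_zero _ _

variable {ℱ : Filtration ℕ m0} {d : ℕ → Ω → ℝ}

lemma stronglyMeasurable_sum_range (hadapted : ∀ n, StronglyMeasurable[ℱ (n + 1)] (d n)) (n : ℕ) :
    StronglyMeasurable[ℱ n] fun ω ↦ ∑ k ∈ Finset.range n, d k ω :=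
  Finset.stronglyMeasurable_fun_sum _ fun k hk ↦
    (hadapted k).mono (ℱ.mono (Finset.mem_range.1 hk))

lemma martingale_sum_range (hadapted : ∀ n, StronglyMeasurable[ℱ (n + 1)] (d n))
    (hd : ∀ n, Integrable (d n) μ) (hcond : ∀ n, μ[d n | ℱ n] =ᵐ[μ] 0) :
    Martingale (fun n ω ↦ ∑ k ∈ Finset.range n, d k ω) ℱ μ := by
  refine martingale_of_condExp_sub_eq_zero_nat (stronglyMeasurable_sum_range hadapted)
    (fun n ↦ integrable_finsetSum _ fun k _ ↦ hd k) fun n ↦ ?_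
  convert hcond n using 2
  ext ω
  simp [Finset.sum_range_succ]

lemma integral_sum_range_sq (hadapted : ∀ n, StronglyMeasurable[ℱ (n + 1)] (d n))
    (hd : ∀ n, MemLp (d n) 2 μ) (hcond : ∀ n, μ[d n | ℱ n] =ᵐ[μ] 0) (n : ℕ) :
    ∫ ω, (∑ k ∈ Finset.range n, d k ω) ^ 2 ∂μ = ∑ k ∈ Finset.range n, ∫ ω, d k ω ^ 2 ∂μ := by
  induction n with
  | zero => simp
  | succ n ih =>
    set S : Ω → ℝ := fun ω ↦ ∑ k ∈ Finset.range n, d k ω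
    have hS : MemLp S 2 μ := memLp_finsetSum _ fun k _ ↦ hd k
    have horth : ∫ ω, S ω * d n ω ∂μ = 0 :=
      integral_mul_eq_zero_of_condExp_eq_zero (ℱ.le n) (stronglyMeasurable_sum_range hadapted n)
        hS (hd n) (hcond n)
    have hSd : Integrable (fun ω ↦ S ω * d n ω) μ := hS.integrable_mul (hd n)
    have hsum : Integrable (fun ω ↦ S ω ^ 2 + 2 * (S ω * d n ω)) μ :=
      hS.integrable_sq.add (hSd.const_mul 2)
    calc ∫ ω, (∑ k ∈ Finset.range (n + 1), d k ω) ^ 2 ∂μ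
        = ∫ ω, (S ω ^ 2 + 2 * (S ω * d n ω)) + d n ω ^ 2 ∂μ := by
          refine integral_congr_ae (.of_forall fun ω ↦ ?_)
          simp only [Finset.sum_range_succ, S]
          ring
      _ = ∫ ω, S ω ^ 2 ∂μ + ∫ ω, d n ω ^ 2 ∂μ := by
          rw [integral_add hsum (hd n).integrable_sq,
            integral_add hS.integrable_sq (hSd.const_mul 2), integral_const_mul, horth, mul_zero,
            add_zero]
      _ = ∑ k ∈ Finset.range (n + 1), ∫ ω, d k ω ^ 2 ∂μ := by rw [ih, Finset.sum_range_succ]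

lemma eLpNorm_one_le_of_memLp_two {S : Ω → ℝ} (hS : MemLp S 2 μ) :
    eLpNorm S 1 μ ≤ ENNReal.ofReal (μ.real Set.univ + ∫ ω, S ω ^ 2 ∂μ) := by
  have hint : Integrable S μ := hS.integrable one_le_two
  rw [eLpNorm_one_eq_lintegral_enorm, ← ofReal_integral_norm_eq_lintegral_enorm hint]
  refine ENNReal.ofReal_le_ofReal ?_
  calc ∫ ω, ‖S ω‖ ∂μ ≤ ∫ ω, (1 + S ω ^ 2) ∂μ := by
        refine integral_mono hint.norm ((integrable_const 1).add hS.integrable_sq) fun ω ↦ ?_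
        dsimp only
        rw [Real.norm_eq_abs, ← sq_abs]
        nlinarith [sq_nonneg (|S ω| - 1), abs_nonneg (S ω)]
    _ = μ.real Set.univ + ∫ ω, S ω ^ 2 ∂μ := by
        rw [integral_add (integrable_const 1) hS.integrable_sq, integral_const,
          smul_eq_mul, mul_one]

theorem ae_summable_conditional_of_condExp_eq_zero
    (hadapted : ∀ n, StronglyMeasurable[ℱ (n + 1)] (d n)) (hd : ∀ n, MemLp (d n) 2 μ)
    (hcond : ∀ n, μ[d n | ℱ n] =ᵐ[μ] 0) (hsum : Summable fun n ↦ ∫ ω, d n ω ^ 2 ∂μ) :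
    ∀ᵐ ω ∂μ, Summable (d · ω) (conditional ℕ) := by
  have hmart := martingale_sum_range hadapted (fun n ↦ (hd n).integrable one_le_two) hcond
  have hbound (n : ℕ) : eLpNorm (fun ω ↦ ∑ k ∈ Finset.range n, d k ω) 1 μ
      ≤ ENNReal.ofReal (μ.real Set.univ + ∑' k, ∫ ω, d k ω ^ 2 ∂μ) := by
    refine (eLpNorm_one_le_of_memLp_two (memLp_finsetSum _ fun k _ ↦ hd k)).trans ?_
    rw [integral_sum_range_sq hadapted hd hcond]
    gcongr
    exact hsum.sum_le_tsum _ fun k _ ↦ integral_nonneg fun ω ↦ sq_nonneg _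
  filter_upwards [hmart.submartingale.exists_ae_tendsto_of_bdd hbound] with ω ⟨l, hl⟩
  exact ⟨l, hasSum_conditional_nat_iff.2 hl⟩

variable {X c : ℕ → Ω → ℝ} {b : ℕ → ℝ}

lemma ae_summable_conditional_mul_of_abs_le (hX : ∀ n, StronglyMeasurable[ℱ (n + 1)] (X n))
    (hX2 : ∀ n, MemLp (X n) 2 μ) (hcond : ∀ n, μ[X n | ℱ n] =ᵐ[μ] 0)
    (hc : ∀ n, StronglyMeasurable[ℱ n] (c n)) (hb : ∀ n ω, |c n ω| ≤ b n)
    (hsum : Summable fun n ↦ b n ^ 2 * ∫ ω, X n ω ^ 2 ∂μ) :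
    ∀ᵐ ω ∂μ, Summable (fun n ↦ c n ω * X n ω) (conditional ℕ) := by
  have hbdd (n : ℕ) : ∀ᵐ ω ∂μ, ‖c n ω‖ ≤ b n := .of_forall (hb n)
  have hd (n : ℕ) : MemLp (fun ω ↦ c n ω * X n ω) 2 μ :=
    (hX2 n).mul (memLp_top_of_bound ((hc n).mono (ℱ.le n)).aestronglyMeasurable _ (hbdd n))
  refine ae_summable_conditional_of_condExp_eq_zero (ℱ := ℱ)
    (fun n ↦ ((hc n).mono (ℱ.mono n.le_succ)).mul (hX n)) hd (fun n ↦ ?_) ?_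
  · filter_upwards [condExp_stronglyMeasurable_mul_of_bound (ℱ.le n) (hc n)
      ((hX2 n).integrable one_le_two) _ (hbdd n), hcond n] with ω h₁ h₂
    exact h₁.trans (by rw [Pi.mul_apply, h₂, Pi.zero_apply, mul_zero])
  · refine hsum.of_nonneg_of_le (fun n ↦ integral_nonneg fun ω ↦ sq_nonneg _) fun n ↦ ?_
    rw [← integral_const_mul]
    refine integral_mono (hd n).integrable_sq ((hX2 n).integrable_sq.const_mul _) fun ω ↦ ?_
    dsimp only
    rw [mul_pow, ← sq_abs (c n ω)]
    gcongr
    exact hb n ω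

/- Truncating `c n` at level `b n` keeps it predictable and changes only finitely many terms. -/
theorem ae_summable_conditional_mul_of_eventually_abs_le
    (hX : ∀ n, StronglyMeasurable[ℱ (n + 1)] (X n))
    (hX2 : ∀ n, MemLp (X n) 2 μ) (hcond : ∀ n, μ[X n | ℱ n] =ᵐ[μ] 0)
    (hc : ∀ n, StronglyMeasurable[ℱ n] (c n)) (hb : ∀ᵐ ω ∂μ, ∀ᶠ n in atTop, |c n ω| ≤ b n)
    (hsum : Summable fun n ↦ b n ^ 2 * ∫ ω, X n ω ^ 2 ∂μ) :
    ∀ᵐ ω ∂μ, Summable (fun n ↦ c n ω * X n ω) (conditional ℕ) := by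
  set c' : ℕ → Ω → ℝ := fun n ↦ {ω | |c n ω| ≤ b n}.indicator (c n) with hc'
  have hc'meas (n : ℕ) : StronglyMeasurable[ℱ n] (c' n) :=
    (hc n).indicator ((hc n).norm.measurableSet_le stronglyMeasurable_const)
  have hc'b (n : ℕ) (ω : Ω) : |c' n ω| ≤ |b n| := by
    by_cases h : |c n ω| ≤ b n
    · simpa [hc', h] using h.trans (le_abs_self _)
    · simp [hc', h]
  filter_upwards [hb, ae_summable_conditional_mul_of_abs_le hX hX2 hcond hc'meas hc'b
    (by simpa only [sq_abs] using hsum)] with ω hω hsumω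
  refine summable_conditional_congr_atTop hsumω ?_
  filter_upwards [hω] with n hn
  simp [hc', hn]

end MartingaleDifferences

lemma ae_summable_of_summable_integral_norm {Ω : Type*} {m0 : MeasurableSpace Ω} {μ : Measure Ω}
    {E : Type*} [NormedAddCommGroup E] [CompleteSpace E] {f : ℕ → Ω → E}
    (hf : ∀ n, Integrable (f n) μ)
    (hsum : Summable fun n ↦ ∫ ω, ‖f n ω‖ ∂μ) : ∀ᵐ ω ∂μ, Summable (f · ω) := by
  have htsum : ∑' n, eLpNorm (f n) 1 μ ≠ ⊤ := by
    simp_rw [eLpNorm_one_eq_lintegral_enorm, ← ofReal_integral_norm_eq_lintegral_enorm (hf _)]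
    exact hsum.tsum_ofReal_ne_top
  filter_upwards [summable_norm_of_tsum_eLpNorm_ne_top le_rfl (fun n ↦ (hf n).1) htsum] with ω hω
  exact hω.of_norm

/-- Adapted, centred noise, each term independent of the past, with variance `σ / (n + 1)`: the
decay rate at which the transfer products grow like a power of `n`. The bound `K / (n + 1) ^ 2` on
the fourth moments makes the third powers almost surely summable. -/
structure IsCriticalNoise {Ω : Type*} {m0 : MeasurableSpace Ω} (γ : ℕ → Ω → ℝ)
    (ℱ : Filtration ℕ m0) (σ K : ℝ) (μ : Measure Ω) : Prop where
  stronglyMeasurable (n : ℕ) : StronglyMeasurable[ℱ (n + 1)] (γ n)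
  indep (n : ℕ) : Indep (MeasurableSpace.comap (γ n) inferInstance) (ℱ n) μ
  integral_eq_zero (n : ℕ) : ∫ ω, γ n ω ∂μ = 0
  integral_sq (n : ℕ) : ∫ ω, γ n ω ^ 2 ∂μ = σ / (n + 1)
  integrable_pow_four (n : ℕ) : Integrable (fun ω ↦ γ n ω ^ 4) μ
  integral_pow_four_le (n : ℕ) : ∫ ω, γ n ω ^ 4 ∂μ ≤ K / ((n : ℝ) + 1) ^ 2

namespace IsCriticalNoise

variable {Ω : Type*} {m0 : MeasurableSpace Ω} {γ : ℕ → Ω → ℝ} {ℱ : Filtration ℕ m0} {σ K : ℝ}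
  {μ : Measure Ω}

lemma aestronglyMeasurable (h : IsCriticalNoise γ ℱ σ K μ) (n : ℕ) :
    AEStronglyMeasurable (γ n) μ :=
  ((h.stronglyMeasurable n).mono (ℱ.le _)).aestronglyMeasurable

lemma memLp_sq (h : IsCriticalNoise γ ℱ σ K μ) (n : ℕ) : MemLp (fun ω ↦ γ n ω ^ 2) 2 μ := by
  refine (memLp_two_iff_integrable_sq (f := fun ω ↦ γ n ω ^ 2)
    ((h.aestronglyMeasurable n).pow 2)).2 ?_
  simpa only [← pow_mul] using h.integrable_pow_four n

lemma ae_summable_rpow_mul_pow_four (h : IsCriticalNoise γ ℱ σ K μ) {r : ℝ} (hr : r < 1) :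
    ∀ᵐ ω ∂μ, Summable fun n : ℕ ↦ ((n : ℝ) + 1) ^ r * γ n ω ^ 4 := by
  refine ae_summable_of_summable_integral_norm (fun n ↦ (h.integrable_pow_four n).const_mul _) ?_
  refine ((summable_natCast_add_one_rpow (r := r - 2) (by linarith)).mul_left K).of_nonneg_of_le
    (fun n ↦ by positivity) fun n ↦ ?_
  have hpos : (0 : ℝ) < (n : ℝ) + 1 := by positivity
  calc ∫ ω, ‖((n : ℝ) + 1) ^ r * γ n ω ^ 4‖ ∂μ = ((n : ℝ) + 1) ^ r * ∫ ω, γ n ω ^ 4 ∂μ := by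
        rw [← integral_const_mul]
        congr with ω
        rw [Real.norm_of_nonneg (by positivity)]
    _ ≤ ((n : ℝ) + 1) ^ r * (K / ((n : ℝ) + 1) ^ 2) := by
        gcongr
        exact h.integral_pow_four_le n
    _ = K * ((n : ℝ) + 1) ^ (r - 2) := by
        rw [Real.rpow_sub hpos, Real.rpow_two]
        ring

lemma div_const (h : IsCriticalNoise γ ℱ σ K μ) (s : ℝ) :
    IsCriticalNoise (fun n ω ↦ γ n ω / s) ℱ (σ / s ^ 2) (K / s ^ 4) μ where
  stronglyMeasurable n := (h.stronglyMeasurable n).div stronglyMeasurable_const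
  indep n := indep_of_indep_of_le_left (h.indep n)
    ((comap_measurable (γ n)).div_const s).comap_le
  integral_eq_zero n := by rw [integral_div, h.integral_eq_zero, zero_div]
  integral_sq n := by
    simp_rw [div_pow]
    rw [integral_div, h.integral_sq, div_right_comm]
  integrable_pow_four n := by
    simp_rw [div_pow]
    exact (h.integrable_pow_four n).div_const _
  integral_pow_four_le n := by
    simp_rw [div_pow]
    rw [integral_div, div_right_comm]
    gcongr
    exact h.integral_pow_four_le n

variable [IsProbabilityMeasure μ]

lemma memLp_two (h : IsCriticalNoise γ ℱ σ K μ) (n : ℕ) : MemLp (γ n) 2 μ :=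
  (memLp_two_iff_integrable_sq (h.aestronglyMeasurable n)).2 ((h.memLp_sq n).integrable one_le_two)

lemma integral_sq_sub_sq_le (h : IsCriticalNoise γ ℱ σ K μ) (n : ℕ) :
    ∫ ω, (γ n ω ^ 2 - σ / (n + 1)) ^ 2 ∂μ ≤ K / ((n : ℝ) + 1) ^ 2 := by
  have hmeas := (h.memLp_sq n).aestronglyMeasurable
  calc ∫ ω, (γ n ω ^ 2 - σ / (n + 1)) ^ 2 ∂μ = Var[fun ω ↦ γ n ω ^ 2; μ] := by
        rw [variance_eq_integral hmeas.aemeasurable, h.integral_sq]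
    _ ≤ ∫ ω, γ n ω ^ 4 ∂μ := by
        simpa only [Pi.pow_apply, ← pow_mul] using variance_le_expectation_sq hmeas
    _ ≤ K / ((n : ℝ) + 1) ^ 2 := h.integral_pow_four_le n

lemma condExp_comp_eq_zero (h : IsCriticalNoise γ ℱ σ K μ) {f : ℝ → ℝ} (hf : Measurable f) {n : ℕ}
    (hint : ∫ ω, f (γ n ω) ∂μ = 0) : μ[fun ω ↦ f (γ n ω) | ℱ n] =ᵐ[μ] 0 := by
  have hle : MeasurableSpace.comap (γ n) inferInstance ≤ m0 :=
    ((h.stronglyMeasurable n).mono (ℱ.le _)).measurable.comap_le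
  have hmeas : StronglyMeasurable[MeasurableSpace.comap (γ n) inferInstance]
      fun ω ↦ f (γ n ω) := (hf.comp (comap_measurable (γ n))).stronglyMeasurable
  filter_upwards [condExp_indep_eq hle (ℱ.le n) hmeas (h.indep n)] with ω hω
  rw [hω, hint, Pi.zero_apply]

lemma ae_summable_conditional_mul (h : IsCriticalNoise γ ℱ σ K μ) {c : ℕ → Ω → ℝ} {b : ℕ → ℝ}
    (hc : ∀ n, StronglyMeasurable[ℱ n] (c n)) (hb : ∀ᵐ ω ∂μ, ∀ᶠ n in atTop, |c n ω| ≤ b n)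
    (hsum : Summable fun n : ℕ ↦ ((n : ℝ) + 1)⁻¹ * b n ^ 2) :
    ∀ᵐ ω ∂μ, Summable (fun n ↦ c n ω * γ n ω) (conditional ℕ) := by
  refine ae_summable_conditional_mul_of_eventually_abs_le h.stronglyMeasurable h.memLp_two
    (fun n ↦ h.condExp_comp_eq_zero measurable_id (h.integral_eq_zero n)) hc hb ?_
  refine (hsum.mul_left σ).congr fun n ↦ ?_
  rw [h.integral_sq, div_eq_mul_inv]
  ring

lemma ae_summable_conditional_mul_sq_sub (h : IsCriticalNoise γ ℱ σ K μ) {c : ℕ → Ω → ℝ} {B : ℝ}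
    (hc : ∀ n, StronglyMeasurable[ℱ n] (c n)) (hB : ∀ n ω, |c n ω| ≤ B) :
    ∀ᵐ ω ∂μ, Summable (fun n ↦ c n ω * (γ n ω ^ 2 - σ / (n + 1))) (conditional ℕ) := by
  have hmean (n : ℕ) : ∫ ω, (γ n ω ^ 2 - σ / (n + 1)) ∂μ = 0 := by
    rw [integral_sub ((h.memLp_sq n).integrable one_le_two) (integrable_const _), h.integral_sq,
      integral_const, probReal_univ, one_smul, sub_self]
  refine ae_summable_conditional_mul_of_abs_le
    (fun n ↦ ((h.stronglyMeasurable n).pow 2).sub stronglyMeasurable_const)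
    (fun n ↦ (h.memLp_sq n).sub (memLp_const _))
    (fun n ↦ h.condExp_comp_eq_zero (f := fun x ↦ x ^ 2 - σ / (n + 1)) (by fun_prop) (hmean n))
    hc hB ?_
  have hsum : Summable fun n : ℕ ↦ ((n : ℝ) + 1) ^ (-2 : ℝ) :=
    summable_natCast_add_one_rpow (by norm_num)
  refine ((hsum.mul_left K).mul_left (B ^ 2)).of_nonneg_of_le (fun n ↦ by positivity) fun n ↦ ?_
  gcongr
  refine (h.integral_sq_sub_sq_le n).trans_eq ?_
  rw [Real.rpow_neg (by positivity), Real.rpow_two, div_eq_mul_inv]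

lemma ae_summable_rpow_mul_sq (h : IsCriticalNoise γ ℱ σ K μ) {r : ℝ} (hr : r < 0) :
    ∀ᵐ ω ∂μ, Summable fun n : ℕ ↦ ((n : ℝ) + 1) ^ r * γ n ω ^ 2 := by
  refine ae_summable_of_summable_integral_norm
    (fun n ↦ ((h.memLp_sq n).integrable one_le_two).const_mul _) ?_
  refine ((summable_natCast_add_one_rpow (r := r - 1) (by linarith)).mul_left σ).congr fun n ↦ ?_
  have hpos : (0 : ℝ) < (n : ℝ) + 1 := by positivity
  calc σ * ((n : ℝ) + 1) ^ (r - 1) = ((n : ℝ) + 1) ^ r * (σ / (n + 1)) := by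
        rw [Real.rpow_sub hpos, Real.rpow_one]
        ring
    _ = ∫ ω, ‖((n : ℝ) + 1) ^ r * γ n ω ^ 2‖ ∂μ := by
        rw [← h.integral_sq, ← integral_const_mul]
        congr with ω
        rw [Real.norm_of_nonneg (by positivity)]

lemma ae_summable_abs_pow_three (h : IsCriticalNoise γ ℱ σ K μ) :
    ∀ᵐ ω ∂μ, Summable fun n ↦ |γ n ω| ^ 3 := by
  filter_upwards [h.ae_summable_rpow_mul_sq (r := -(1 / 2)) (by norm_num),
    h.ae_summable_rpow_mul_pow_four (r := 1 / 2) (by norm_num)] with ω h₂ h₄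
  refine (h₂.add h₄).of_nonneg_of_le (fun n ↦ by positivity) fun n ↦ ?_
  have hu : 0 < ((n : ℝ) + 1) ^ (1 / 2 : ℝ) := by positivity
  rw [Real.rpow_neg (by positivity)]
  set u := ((n : ℝ) + 1) ^ (1 / 2 : ℝ)
  calc |γ n ω| ^ 3 = u⁻¹ * (γ n ω ^ 2 * (|γ n ω| * u)) := by
        rw [← sq_abs]
        field_simp
    _ ≤ u⁻¹ * (γ n ω ^ 2 * (1 + (|γ n ω| * u) ^ 2)) := by
        gcongr
        nlinarith [sq_nonneg (|γ n ω| * u - 1), abs_nonneg (γ n ω)]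
    _ = u⁻¹ * γ n ω ^ 2 + u * γ n ω ^ 4 := by
        rw [mul_pow, sq_abs]
        field_simp

lemma ae_summable_abs_div (h : IsCriticalNoise γ ℱ σ K μ) :
    ∀ᵐ ω ∂μ, Summable fun n : ℕ ↦ |γ n ω| / (n + 1) := by
  filter_upwards [h.ae_summable_rpow_mul_sq (r := -(1 / 2)) (by norm_num)] with ω h₂
  refine (h₂.add (summable_natCast_add_one_rpow (r := -(3 / 2)) (by norm_num))).of_nonneg_of_le
    (fun n ↦ by positivity) fun n ↦ ?_
  have hpos : (0 : ℝ) < (n : ℝ) + 1 := by positivity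
  have hu : 0 < ((n : ℝ) + 1) ^ (-(1 / 2) : ℝ) := by positivity
  have hinv : ((n : ℝ) + 1)⁻¹ = (((n : ℝ) + 1) ^ (-(1 / 2) : ℝ)) ^ 2 := by
    rw [← Real.rpow_mul_natCast hpos.le, ← Real.rpow_neg_one]
    norm_num
  have hthree : ((n : ℝ) + 1) ^ (-(3 / 2) : ℝ) = (((n : ℝ) + 1) ^ (-(1 / 2) : ℝ)) ^ 3 := by
    rw [← Real.rpow_mul_natCast hpos.le]
    norm_num
  rw [div_eq_mul_inv, hinv, hthree, ← sq_abs (γ n ω)]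
  set u := ((n : ℝ) + 1) ^ (-(1 / 2) : ℝ)
  nlinarith [mul_nonneg hu.le (sq_nonneg (|γ n ω| - u)), mul_nonneg hu.le (sq_nonneg (|γ n ω|)),
    pow_pos hu 3]

end IsCriticalNoise

section RandomTransfer

variable {Ω : Type*} {m0 : MeasurableSpace Ω} {γ : ℕ → Ω → ℝ} {ℱ : Filtration ℕ m0}

lemma measurable_doublePhase : Measurable doublePhase :=
  Complex.continuous_conj.measurable.div measurable_id

lemma stronglyMeasurable_transfer (hγ : ∀ n, StronglyMeasurable[ℱ (n + 1)] (γ n))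
    (L : ℕ → ℂ →ₗ[ℝ] ℂ) (v : ℂ) (n : ℕ) :
    StronglyMeasurable[ℱ n] fun ω ↦ transfer L (γ · ω) n v := by
  induction n with
  | zero => exact stronglyMeasurable_const
  | succ n ih =>
    have hz : StronglyMeasurable[ℱ (n + 1)] fun ω ↦ L n (transfer L (γ · ω) n v) :=
      (L n).continuous_of_finiteDimensional.comp_stronglyMeasurable (ih.mono (ℱ.mono n.le_succ))
    have hre := Complex.continuous_re.comp_stronglyMeasurable hz
    exact hz.sub (stronglyMeasurable_const.mul
      (Complex.continuous_ofReal.comp_stronglyMeasurable ((hγ n).mul hre)))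

lemma stronglyMeasurable_doublePhase_transfer (hγ : ∀ n, StronglyMeasurable[ℱ (n + 1)] (γ n))
    (L : ℕ → ℂ →ₗ[ℝ] ℂ) (v : ℂ) (n : ℕ) :
    StronglyMeasurable[ℱ n] fun ω ↦ doublePhase (L n (transfer L (γ · ω) n v)) :=
  (measurable_doublePhase.comp ((L n).continuous_of_finiteDimensional.measurable.comp
    (stronglyMeasurable_transfer hγ L v n).measurable)).stronglyMeasurable

lemma stronglyMeasurable_transferRatio (hγ : ∀ n, StronglyMeasurable[ℱ (n + 1)] (γ n))
    (L : ℕ → ℂ →ₗ[ℝ] ℂ) (n : ℕ) :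
    StronglyMeasurable[ℱ n] fun ω ↦ transferRatio L (γ · ω) n :=
  ((stronglyMeasurable_transfer hγ L _ n).measurable.div
    (stronglyMeasurable_transfer hγ L _ n).measurable).stronglyMeasurable

variable {μ : Measure Ω} [IsProbabilityMeasure μ] {σ K : ℝ} {L : ℕ → ℂ →ₗ[ℝ] ℂ} {α : ℂ} {a : ℕ → ℝ}

theorem ae_tendsto_log_norm_transfer (h : IsCriticalNoise γ ℱ σ K μ) (hα : ‖α‖ = 1)
    (hα4 : doublePhase α ^ 2 ≠ 1) (ha : Summable a) (hL : ∀ n z, ‖L n z - α * z‖ ≤ a n * ‖z‖)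
    (hdet : ∀ n, LinearMap.det (L n) ≠ 0) {v : ℂ} (hv : v ≠ 0) :
    ∀ᵐ ω ∂μ, Tendsto (fun n ↦ Real.log ‖transfer L (γ · ω) n v‖ / Real.log n) atTop
      (𝓝 (σ / 8)) := by
  have hζ := stronglyMeasurable_doublePhase_transfer h.stronglyMeasurable L v
  have hlin : ∀ᵐ ω ∂μ, Summable (fun n : ℕ ↦ (harmonic (n + 1) : ℝ)⁻¹ *
      (doublePhase (L n (transfer L (γ · ω) n v))).im * γ n ω) (conditional ℕ) := by
    refine h.ae_summable_conditional_mul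
      (fun n ↦ stronglyMeasurable_const.mul (Complex.continuous_im.comp_stronglyMeasurable (hζ n)))
      (.of_forall fun ω ↦ .of_forall fun n ↦ ?_) summable_inv_mul_inv_harmonic_sq
    have hpos : (0 : ℝ) < harmonic (n + 1) := harmonic_succ_pos n
    rw [abs_mul, abs_of_pos (inv_pos.2 hpos)]
    exact mul_le_of_le_one_right (inv_pos.2 hpos).le
      ((Complex.abs_im_le_norm _).trans (norm_doublePhase_le_one _))
  have hquad : ∀ᵐ ω ∂μ, Summable (fun n : ℕ ↦
      ((1 + doublePhase (L n (transfer L (γ · ω) n v))) ^ 2).re * (γ n ω ^ 2 - σ / (n + 1)))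
      (conditional ℕ) := by
    refine h.ae_summable_conditional_mul_sq_sub (B := (1 + 1) ^ 2)
      (fun n ↦ Complex.continuous_re.comp_stronglyMeasurable
        ((stronglyMeasurable_const.add (hζ n)).pow 2)) fun n ω ↦ ?_
    refine (Complex.abs_re_le_norm _).trans ?_
    rw [norm_pow]
    gcongr
    exact norm_add_le_of_le norm_one.le (norm_doublePhase_le_one _)
  filter_upwards [hlin, hquad, h.ae_summable_abs_pow_three, h.ae_summable_abs_div]
    with ω hlinω hquadω hγ3 hγ1
  exact tendsto_log_norm_div_log hα hα4 ha (transfer_ne_zero hdet hv) (fun n ↦ hL n _)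
    (transfer_succ_apply · v) hγ3 hγ1 hlinω hquadω

theorem ae_exists_norm_transferRatio_sub_le (h : IsCriticalNoise γ ℱ σ K μ) (hα : ‖α‖ = 1)
    (hα4 : doublePhase α ^ 2 ≠ 1) (ha : Summable a) (hL : ∀ n z, ‖L n z - α * z‖ ≤ a n * ‖z‖)
    (hdet : ∀ n, LinearMap.det (L n) ≠ 0) {κ : ℝ} (hκ : 0 < κ) (hκσ : κ < 2 * (σ / 8)) :
    ∀ᵐ ω ∂μ, ∃ l C : ℝ, ∀ᶠ n : ℕ in atTop,
      ‖transferRatio L (γ · ω) n - l‖ ≤ C / ((n : ℝ) + 1) ^ κ := by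
  obtain ⟨s, hs, hsκ⟩ : ∃ s, 0 < s ∧ s < 2 * (σ / 8) - κ := exists_between (sub_pos.2 hκσ)
  have hκs : κ + s < 2 * (σ / 8) := by linarith
  have hgrowth := ae_tendsto_log_norm_transfer h hα hα4 ha hL hdet one_ne_zero
  have hsum : Summable fun n : ℕ ↦ ((n : ℝ) + 1)⁻¹ * (((n : ℝ) + 1) ^ (-s)) ^ 2 := by
    refine (summable_natCast_add_one_rpow (r := -1 + -s * (2 : ℕ))
      (by push_cast; linarith)).congr fun n ↦ ?_
    have hpos : (0 : ℝ) < (n : ℝ) + 1 := by positivity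
    rw [Real.rpow_add hpos, Real.rpow_neg_one, Real.rpow_mul_natCast hpos.le]
  have hlin : ∀ᵐ ω ∂μ, Summable (fun n : ℕ ↦ ((n : ℝ) + 1) ^ κ * (transferRatio L (γ · ω) n).im *
      (doublePhase (L n (transfer L (γ · ω) n 1))).re * γ n ω) (conditional ℕ) := by
    refine h.ae_summable_conditional_mul (fun n ↦ (stronglyMeasurable_const.mul
      (Complex.continuous_im.comp_stronglyMeasurable
        (stronglyMeasurable_transferRatio h.stronglyMeasurable L n))).mul
      (Complex.continuous_re.comp_stronglyMeasurable
        (stronglyMeasurable_doublePhase_transfer h.stronglyMeasurable L 1 n))) ?_ hsum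
    filter_upwards [hgrowth] with ω hω
    filter_upwards [eventually_abs_rpow_mul_im_transferRatio_le hα ha hL hdet hω hκs] with n hn
    rw [abs_mul]
    exact (mul_le_of_le_one_right (abs_nonneg _)
      ((Complex.abs_re_le_norm _).trans (norm_doublePhase_le_one _))).trans hn
  filter_upwards [hgrowth, hlin, h.ae_summable_rpow_mul_sq (neg_lt_zero.2 hs),
    h.ae_summable_abs_pow_three] with ω hω hlinω hquad hγ3
  exact exists_norm_transferRatio_sub_le hα ha hL hdet hω
    (tendsto_zero_of_summable_abs_pow_three hγ3) hκ hs hκs hquad hlinω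

theorem ae_exists_tendsto_log_norm_transfer (h : IsCriticalNoise γ ℱ σ K μ) (hσ : 0 < σ)
    (hα : ‖α‖ = 1) (hα4 : doublePhase α ^ 2 ≠ 1) (ha : Summable a)
    (hL : ∀ n z, ‖L n z - α * z‖ ≤ a n * ‖z‖) (hdet : ∀ n, LinearMap.det (L n) ≠ 0) :
    ∀ᵐ ω ∂μ, ∃ v ≠ 0, Tendsto (fun n ↦ Real.log ‖transfer L (γ · ω) n v‖ / Real.log n) atTop
      (𝓝 (-(σ / 8))) := by
  have hdecay : ∀ᵐ ω ∂μ, ∀ κ : ℚ, 0 < (κ : ℝ) → (κ : ℝ) < 2 * (σ / 8) →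
      ∃ l C : ℝ, ∀ᶠ n : ℕ in atTop,
        ‖transferRatio L (γ · ω) n - l‖ ≤ C / ((n : ℝ) + 1) ^ (κ : ℝ) :=
    ae_all_iff.2 fun κ ↦ eventually_imp_distrib_left.2 fun hκ ↦
      eventually_imp_distrib_left.2 fun hκσ ↦
      ae_exists_norm_transferRatio_sub_le h hα hα4 ha hL hdet hκ hκσ
  filter_upwards [ae_tendsto_log_norm_transfer h hα hα4 ha hL hdet one_ne_zero, hdecay]
    with ω hgrowth hω
  exact exists_tendsto_log_norm_transfer hα ha hL hdet (by positivity) hgrowth hω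

end RandomTransfer

section StrictPast

variable {Ω : Type*} {m0 : MeasurableSpace Ω} {g : ℕ → Ω → ℝ}

/-- The filtration whose `n`-th σ-algebra is generated by the `g j` with `j < n`. -/
def strictPast (g : ℕ → Ω → ℝ) (hg : ∀ n, Measurable (g n)) : Filtration ℕ m0 where
  seq n := ⨆ j ∈ Set.Iio n, MeasurableSpace.comap (g j) inferInstance
  mono' _ _ hmn := biSup_mono fun _ hj ↦ lt_of_lt_of_le hj hmn
  le' _ := iSup₂_le fun j _ ↦ (hg j).comap_le

lemma stronglyMeasurable_strictPast (hg : ∀ n, Measurable (g n)) (n : ℕ) :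
    StronglyMeasurable[strictPast g hg (n + 1)] (g n) :=
  ((comap_measurable (g n)).mono
    (le_iSup₂_of_le n (Set.mem_Iio.2 n.lt_succ_self) le_rfl) le_rfl).stronglyMeasurable

lemma indep_comap_strictPast {μ : Measure Ω} (hg : ∀ n, Measurable (g n)) (hi : iIndepFun g μ)
    (n : ℕ) : Indep (MeasurableSpace.comap (g n) inferInstance) (strictPast g hg n) μ := by
  have h := indep_iSup_of_disjoint (fun i ↦ (hg i).comap_le) ((iIndepFun_iff_iIndep _ _ _).1 hi)
    (S := {n}) (T := Set.Iio n) (by simp)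
  rwa [iSup_singleton] at h

end StrictPast

section ConjugatedMatrix

variable {ι : Type*} [Fintype ι]

lemma norm_mulVec_le [Nonempty ι] {m : Matrix ι ι ℝ} {η : ℝ} (hm : ∀ i j, |m i j| ≤ η)
    (w : ι → ℝ) : ‖m *ᵥ w‖ ≤ Fintype.card ι * (η * ‖w‖) := by
  refine (pi_norm_le_iff_of_nonempty _).2 fun i ↦ ?_
  calc ‖(m *ᵥ w) i‖ ≤ ∑ j, ‖m i j * w j‖ := norm_sum_le _ _
    _ ≤ ∑ _j : ι, η * ‖w‖ := by
        gcongr with j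
        rw [norm_mul]
        exact mul_le_mul (hm i j) (norm_le_pi_norm w j) (norm_nonneg _)
          ((abs_nonneg _).trans (hm i j))
    _ = Fintype.card ι * (η * ‖w‖) := by
        rw [Finset.sum_const, Finset.card_univ, nsmul_eq_mul]

lemma exists_norm_conj_toLin'_le [Nonempty ι] [DecidableEq ι] {E : Type*} [NormedAddCommGroup E]
    [NormedSpace ℝ E] (e : E ≃ₗ[ℝ] (ι → ℝ)) :
    ∃ K : ℝ, ∀ (m : Matrix ι ι ℝ) (η : ℝ), (∀ i j, |m i j| ≤ η) →
      ∀ z, ‖e.symm.conj (toLin' m) z‖ ≤ K * η * ‖z‖ := by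
  have : FiniteDimensional ℝ E := e.symm.finiteDimensional
  set T := e.toContinuousLinearEquiv
  refine ⟨‖(T.symm : (ι → ℝ) →L[ℝ] E)‖ * Fintype.card ι * ‖(T : E →L[ℝ] ι → ℝ)‖,
    fun m η hm z ↦ ?_⟩
  have hη : 0 ≤ η := (abs_nonneg _).trans (hm (Classical.arbitrary ι) (Classical.arbitrary ι))
  calc ‖T.symm (m *ᵥ T z)‖ ≤ ‖(T.symm : (ι → ℝ) →L[ℝ] E)‖ * ‖m *ᵥ T z‖ :=
        (T.symm : (ι → ℝ) →L[ℝ] E).le_opNorm _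
    _ ≤ ‖(T.symm : (ι → ℝ) →L[ℝ] E)‖ *
          (Fintype.card ι * (η * (‖(T : E →L[ℝ] ι → ℝ)‖ * ‖z‖))) := by
        gcongr
        refine (norm_mulVec_le hm _).trans ?_
        gcongr
        exact (T : E →L[ℝ] ι → ℝ).le_opNorm z
    _ = _ := by ring

end ConjugatedMatrix

section PruferCoordinates

variable {φ : ℝ}

/-- The real-linear isomorphism `p ↦ p • f₊ + conj p • f₋` from the Prüfer coordinate `p`, written
in real and imaginary parts. -/
noncomputable def pruferEquiv (φ : ℝ) (hφ : Real.sin φ ≠ 0) : ℂ ≃ₗ[ℝ] (Fin 2 → ℝ) where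
  toFun z := ![2 * z.re, 2 * (z.re * (1 - Real.cos φ) - z.im * Real.sin φ)]
  invFun w := ⟨w 0 / 2, (w 0 * (1 - Real.cos φ) - w 1) / (2 * Real.sin φ)⟩
  map_add' z w := by
    rw [Complex.add_re, Complex.add_im, cons_add_cons, cons_add_cons, empty_add_empty]
    ring_nf
  map_smul' t z := by
    rw [Complex.smul_re, Complex.smul_im, smul_cons, smul_cons, smul_empty]
    simp only [smul_eq_mul, RingHom.id_apply]
    ring_nf
  left_inv z := by
    apply Complex.ext
    · simp
    · simp only [cons_val_zero, cons_val_one, cons_val_fin_one]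
      field_simp
      ring
  right_inv w := by
    ext i
    fin_cases i
    · exact mul_div_cancel₀ _ two_ne_zero
    · simp only [Fin.mk_one, cons_val_one, cons_val_fin_one]
      field_simp
      ring

lemma pruferEquiv_apply (hφ : Real.sin φ ≠ 0) (z : ℂ) : pruferEquiv φ hφ z =
    ![2 * z.re, 2 * (z.re * (1 - Real.cos φ) - z.im * Real.sin φ)] := rfl

lemma pruferEquiv_apply_zero (hφ : Real.sin φ ≠ 0) (z : ℂ) :
    (pruferEquiv φ hφ z 0 : ℂ) = z + conj z := by
  rw [Complex.add_conj]
  rfl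

lemma pruferEquiv_apply_one (hφ : Real.sin φ ≠ 0) (z : ℂ) :
    (pruferEquiv φ hφ z 1 : ℂ) = z * (1 - Complex.exp (-(φ * Complex.I))) +
      conj z * (1 - Complex.exp (φ * Complex.I)) := by
  have hconj : conj z * (1 - Complex.exp (φ * Complex.I)) =
      conj (z * (1 - Complex.exp (-(φ * Complex.I)))) := by
    rw [map_mul, map_sub, map_one, ← Complex.exp_conj]
    simp
  rw [hconj, Complex.add_conj, ← neg_mul, ← Complex.ofReal_neg, pruferEquiv_apply]
  simp only [Complex.mul_re, Complex.sub_re, Complex.sub_im, Complex.one_re, Complex.one_im,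
    Complex.exp_ofReal_mul_I_re, Complex.exp_ofReal_mul_I_im, Real.cos_neg, Real.sin_neg,
    cons_val_one, cons_val_fin_one]
  ring_nf

lemma pruferEquiv_shear (hφ : Real.sin φ ≠ 0) (x : ℝ) (z : ℂ) :
    pruferEquiv φ hφ (shear (x / Real.sin φ) z) = !![1, 0; x, 1] *ᵥ pruferEquiv φ hφ z := by
  ext i
  fin_cases i
  · simp [pruferEquiv_apply, re_shear]
  · simp only [Fin.mk_one, pruferEquiv_apply, re_shear, im_shear, cons_val_one, cons_val_fin_one,
      mulVec_cons, mulVec_empty, add_zero, Pi.add_apply, Pi.smul_apply, Function.comp_apply,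
      head_cons, tail_cons, smul_eq_mul]
    field_simp
    ring

lemma pruferEquiv_exp_mul (hφ : Real.sin φ ≠ 0) (z : ℂ) :
    pruferEquiv φ hφ (Complex.exp (φ * Complex.I) * z) =
      !![2 * Real.cos φ - 1, 1; 2 * Real.cos φ - 2, 1] *ᵥ pruferEquiv φ hφ z := by
  have hcos := Real.cos_sq' φ
  ext i
  fin_cases i
  · simp only [Fin.zero_eta, pruferEquiv_apply, Complex.mul_re, Complex.exp_ofReal_mul_I_re,
      Complex.exp_ofReal_mul_I_im, cons_val_zero, mulVec_cons, mulVec_empty, add_zero, Pi.add_apply,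
      Pi.smul_apply, Function.comp_apply, head_cons, tail_cons, smul_eq_mul]
    ring
  · simp only [Fin.mk_one, pruferEquiv_apply, Complex.mul_re, Complex.mul_im,
      Complex.exp_ofReal_mul_I_re, Complex.exp_ofReal_mul_I_im, cons_val_one, cons_val_fin_one,
      mulVec_cons, mulVec_empty, add_zero, Pi.add_apply, Pi.smul_apply, Function.comp_apply,
      head_cons, tail_cons, smul_eq_mul]
    linear_combination -2 * z.re * hcos

lemma exists_norm_conj_toLin'_sub_le (hφ : Real.sin φ ≠ 0) :
    ∃ K : ℝ, ∀ (m : Matrix (Fin 2) (Fin 2) ℝ) (η : ℝ),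
      (∀ i j, |m i j - !![2 * Real.cos φ - 1, 1; 2 * Real.cos φ - 2, 1] i j| ≤ η) →
      ∀ z, ‖(pruferEquiv φ hφ).symm.conj (toLin' m) z - Complex.exp (φ * Complex.I) * z‖
        ≤ K * η * ‖z‖ := by
  obtain ⟨K, hK⟩ := exists_norm_conj_toLin'_le (pruferEquiv φ hφ)
  refine ⟨K, fun m η hm z ↦ (hK (m - _) η hm z).trans_eq' ?_⟩
  rw [map_sub, map_sub, LinearMap.sub_apply]
  congr 2
  rw [LinearEquiv.conj_apply_apply, toLin'_apply, LinearEquiv.symm_symm, ← pruferEquiv_exp_mul,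
    LinearEquiv.symm_apply_apply]

lemma pruferEquiv_transfer_succ (hφ : Real.sin φ ≠ 0) (M : ℕ → Matrix (Fin 2) (Fin 2) ℝ)
    (g : ℕ → ℝ) (p : ℂ) (n : ℕ) :
    pruferEquiv φ hφ (transfer (fun n ↦ (pruferEquiv φ hφ).symm.conj (toLin' (M n)))
        (fun n ↦ g n / Real.sin φ) (n + 1) p) =
      (!![1, 0; g n, 1] * M n) *ᵥ
        pruferEquiv φ hφ (transfer (fun n ↦ (pruferEquiv φ hφ).symm.conj (toLin' (M n)))
          (fun n ↦ g n / Real.sin φ) n p) := by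
  rw [transfer_succ_apply, pruferEquiv_shear, LinearEquiv.conj_apply_apply, LinearEquiv.symm_symm,
    LinearEquiv.apply_symm_apply, toLin'_apply, mulVec_mulVec]

lemma doublePhase_exp_sq_ne_one (hφ : Real.sin (2 * φ) ≠ 0) :
    doublePhase (Complex.exp (φ * Complex.I)) ^ 2 ≠ 1 := by
  have hexp : doublePhase (Complex.exp (φ * Complex.I)) ^ 2 =
      Complex.exp ((-(2 * (2 * φ)) : ℝ) * Complex.I) := by
    rw [doublePhase, ← Complex.exp_conj, ← Complex.exp_sub, ← Complex.exp_nat_mul]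
    congr 1
    simp only [map_mul, Complex.conj_ofReal, Complex.conj_I]
    push_cast
    ring
  intro h
  have hre := congrArg Complex.re (hexp.symm.trans h)
  rw [Complex.exp_ofReal_mul_I_re, Real.cos_neg, Real.cos_two_mul', Real.cos_sq',
    Complex.one_re] at hre
  exact hφ (pow_eq_zero_iff two_ne_zero |>.1 (by linarith))

lemma sin_two_mul_ne_zero (hφ : φ ∈ Set.Ioo 0 Real.pi) (hφ2 : φ ≠ Real.pi / 2) :
    Real.sin (2 * φ) ≠ 0 := by
  have hcos : Real.cos φ ≠ 0 := fun h ↦ hφ2 <| Real.injOn_cos (Set.Ioo_subset_Icc_self hφ)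
    ⟨by positivity, by linarith [Real.pi_pos]⟩ (h.trans Real.cos_pi_div_two.symm)
  rw [Real.sin_two_mul]
  exact mul_ne_zero (mul_ne_zero two_ne_zero (Real.sin_pos_of_mem_Ioo hφ).ne') hcos

end PruferCoordinates

theorem stmt15_general {Ω : Type*} [MeasurableSpace Ω] (ν : Measure Ω) [IsProbabilityMeasure ν]
    {lam K : ℝ} (hlam : lam ≠ 0) {g : ℕ → Ω → ℝ} (hgmeas : ∀ n, Measurable (g n))
    (hindep : iIndepFun g ν) (hmean : ∀ n, ∫ ω, g n ω ∂ν = 0)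
    (hvar : ∀ n, ∫ ω, g n ω ^ 2 ∂ν = lam ^ 2 / (n + 1))
    (hint4 : ∀ n, Integrable (fun ω ↦ g n ω ^ 4) ν)
    (h4 : ∀ n, ∫ ω, g n ω ^ 4 ∂ν ≤ K / ((n : ℝ) + 1) ^ 2)
    {φ : ℝ} (hφ : Real.sin (2 * φ) ≠ 0) {a : ℕ → ℝ} (hsum : Summable a)
    {M : ℕ → Matrix (Fin 2) (Fin 2) ℝ} (hMinv : ∀ n, IsUnit (M n).det)
    (hM : ∀ n i j, |M n i j - !![2 * Real.cos φ - 1, 1; 2 * Real.cos φ - 2, 1] i j| ≤ a n) :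
    ∀ᵐ ω ∂ν, ∃ v₀ : Fin 2 → ℝ, v₀ ≠ 0 ∧ ∃ v : ℕ → Fin 2 → ℝ, v 0 = v₀ ∧
      (∀ n, v (n + 1) = (!![1, 0; g n ω, 1] * M n) *ᵥ v n) ∧
      ∃ p : ℕ → ℂ,
        (∀ n, (v n 0 : ℂ) = p n + conj (p n) ∧
          (v n 1 : ℂ) = p n * (1 - Complex.exp (-(φ * Complex.I))) +
            conj (p n) * (1 - Complex.exp (φ * Complex.I))) ∧
        Tendsto (fun n ↦ Real.log ‖p n‖ / Real.log n) atTop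
          (𝓝 (-(lam ^ 2) / (8 * Real.sin φ ^ 2))) := by
  have hsin : Real.sin φ ≠ 0 := fun h ↦ hφ (by rw [Real.sin_two_mul, h, mul_zero, zero_mul])
  have hnoise : IsCriticalNoise g (strictPast g hgmeas) (lam ^ 2) K ν :=
    ⟨stronglyMeasurable_strictPast hgmeas, indep_comap_strictPast hgmeas hindep, hmean, hvar,
      hint4, h4⟩
  obtain ⟨K', hK'⟩ := exists_norm_conj_toLin'_sub_le hsin
  have hdet (n : ℕ) : LinearMap.det ((pruferEquiv φ hsin).symm.conj (toLin' (M n))) ≠ 0 := by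
    rw [LinearEquiv.conj_apply, LinearMap.comp_assoc, LinearMap.det_conj, LinearMap.det_toLin']
    exact (hMinv n).ne_zero
  filter_upwards [ae_exists_tendsto_log_norm_transfer (hnoise.div_const (Real.sin φ))
    (by positivity) (Complex.norm_exp_ofReal_mul_I φ) (doublePhase_exp_sq_ne_one hφ)
    (hsum.mul_left K') (fun n ↦ hK' (M n) (a n) (hM n)) hdet] with ω ⟨p₀, hp₀, hlim⟩
  refine ⟨_, (pruferEquiv φ hsin).map_ne_zero_iff.2 hp₀,
    fun n ↦ pruferEquiv φ hsin (transfer _ _ n p₀), rfl,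
    pruferEquiv_transfer_succ hsin M (g · ω) p₀, _,
    fun n ↦ ⟨pruferEquiv_apply_zero hsin _, pruferEquiv_apply_one hsin _⟩, ?_⟩
  rwa [show -(lam ^ 2) / (8 * Real.sin φ ^ 2) = -(lam ^ 2 / Real.sin φ ^ 2 / 8) by field_simp]

/-- random transfer-matrix setup, indices shifted so that `g n`, `M n`,
`a n` stand for `g_{n+1}`, `M_{n+1}`, `a_{n+1}`: for `φ ∈ (0,π) \ {π/4, π/2, 3π/4}`,
for `ν`-a.e. `ω` there is an initial vector `v₀ ≠ 0` whose orbit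
`v (n+1) = B(g_{n+1}) M_{n+1} v n`, decomposed as `v n = p n • f₊ + conj (p n) • f₋`
with Prüfer radii `R n = |p n|`, satisfies `ln R_n / ln n → -λ²/(8 sin²φ)`. -/
theorem stmt15
    {Ω : Type*} [MeasurableSpace Ω] (ν : Measure Ω) [IsProbabilityMeasure ν]
    (lam ε C₁ C₄ : ℝ) (hlam : 0 < lam) (hε : 0 < ε) (hC₁ : 0 < C₁) (hC₄ : 0 < C₄)
    (g : ℕ → Ω → ℝ) (hgmeas : ∀ n, Measurable (g n))
    (hindep : iIndepFun g ν)
    (hmean : ∀ n, ∫ ω, g n ω ∂ν = 0)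
    (hvar : ∀ n, ∫ ω, (g n ω) ^ 2 ∂ν = lam ^ 2 / ((n : ℝ) + 1))
    (hint4 : ∀ n, Integrable (fun ω => (g n ω) ^ 4) ν)
    (h4 : ∀ n, ∫ ω, (g n ω) ^ 4 ∂ν ≤ C₄ * lam ^ 4 / ((n : ℝ) + 1) ^ 2)
    (hbdd : ∀ n ω, |g n ω| ≤ C₁ * ((n : ℝ) + 1) ^ (-(1 / 3 : ℝ) - ε))
    (φ : ℝ) (hφ : φ ∈ Set.Ioo 0 Real.pi)
    (hφ4 : φ ≠ Real.pi / 4) (hφ2 : φ ≠ Real.pi / 2) (hφ34 : φ ≠ 3 * Real.pi / 4)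
    (a : ℕ → ℝ) (ha : ∀ n, 0 < a n) (hsum : Summable a)
    (C : ℝ) (hC : 0 < C)
    (M : ℕ → Matrix (Fin 2) (Fin 2) ℝ) (hMinv : ∀ n, IsUnit (M n).det)
    (hM : ∀ n, ∀ i j : Fin 2,
      |M n i j -
          (Matrix.of ![![2 * Real.cos φ - 1, 1], ![2 * Real.cos φ - 2, 1]]) i j|
        ≤ C * a n) :
    ∀ᵐ ω ∂ν, ∃ v₀ : Fin 2 → ℝ, v₀ ≠ 0 ∧
      ∃ v : ℕ → Fin 2 → ℝ, v 0 = v₀ ∧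
        (∀ n, v (n + 1) = ((Matrix.of ![![1, 0], ![g n ω, 1]]) * M n).mulVec (v n)) ∧
        ∃ p : ℕ → ℂ,
          (∀ n,
            ((v n 0 : ℝ) : ℂ) = p n + starRingEnd ℂ (p n) ∧
            ((v n 1 : ℝ) : ℂ) =
              p n * (1 - Complex.exp (-(φ * Complex.I))) +
                starRingEnd ℂ (p n) * (1 - Complex.exp (φ * Complex.I))) ∧
          Tendsto (fun n => Real.log ‖p n‖ / Real.log n) atTop
            (nhds (-(lam ^ 2) / (8 * (Real.sin φ) ^ 2))) := by
  exact stmt15_general ν hlam.ne' hgmeas hindep hmean hvar hint4 h4 (sin_two_mul_ne_zero hφ hφ2)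
    (hsum.mul_left C) hMinv hM
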